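/- Let f(θ1,θ2,θ3) be an entire function of three complex variables, 2π-periodic in each variable. Then the triple correlation sum over distinct eigenvalue indices, T_3(f) := ∫_{U(N)} Σ*_{j1,j2,j3} f(θ_{j1}, θ_{j2}, θ_{j3}) dX (the star denoting that j1, j2, j3 are pairwise distinct indices of eigenvalues e^{iθ_j} of X), equals (1/(2π)^3) ∫_{−π}^{π} ∫_{−π}^{π} ∫_{−π}^{π} [ J(iθ1,iθ2;−iθ3) + J(iθ1,iθ3;−iθ2) + J(iθ2,iθ3;−iθ1) + J(−iθ1,−iθ2;iθ3) + J(−iθ1,−iθ3;iθ2) + J(−iθ2,−iθ3;iθ1) + N( J(−iθ1;iθ3) + J(−iθ2;iθ3) + J(−iθ1;iθ2) + J(−iθ3;iθ2) + J(−iθ2;iθ1) + J(−iθ3;iθ1) ) + N^3 ] f(θ1,θ2,θ3) dθ1 dθ2 dθ3, where J denotes the explicit closed-form expressions defined in the context and the integrand is interpreted via its (entire) analytic continuation across the removable singularities at coinciding θ's. -/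

import Mathlib

open Complex Matrix MeasureTheory Real intervalIntegral

noncomputable section

open scoped Classical

instance matrixMeasurableSpace (N : ℕ) : MeasurableSpace (Matrix (Fin N) (Fin N) ℂ) :=
  (inferInstance : MeasurableSpace (Fin N → Fin N → ℂ))

/-- The characteristic polynomial `Λ_X(s) = det(I − s X*)` of a unitary matrix `X`. -/
def Lam {N : ℕ} (X : Matrix.unitaryGroup (Fin N) ℂ) (s : ℂ) : ℂ :=
  Matrix.det ((1 : Matrix (Fin N) (Fin N) ℂ) - s • (X : Matrix (Fin N) (Fin N) ℂ)ᴴ)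

/-- `z(x) = 1/(1 − e^{−x})`. -/
def zf (x : ℂ) : ℂ := (1 - Complex.exp (-x))⁻¹

/-- The logarithmic derivative `z'/z`. -/
def zl (x : ℂ) : ℂ := deriv zf x / zf x

/-- `J(α;β) = (z'/z)'(α+β) + e^{−N(α+β)} z(α+β) z(−α−β)`. -/
def Jb (N : ℕ) (α β : ℂ) : ℂ :=
  deriv zl (α + β) + Complex.exp (-(N : ℂ) * (α + β)) * zf (α + β) * zf (-α - β)

/-- `J(α1,α2;β)`, the three-variable closed-form expression. -/
def Ja (N : ℕ) (α1 α2 β : ℂ) : ℂ :=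
  Complex.exp (-(N : ℂ) * (α1 + β)) * zf (α1 + β) * zf (-α1 - β) *
      (zl (α2 - α1) - zl (α2 + β)) +
    Complex.exp (-(N : ℂ) * (α2 + β)) * zf (α2 + β) * zf (-α2 - β) *
      (zl (α1 - α2) - zl (α1 + β))

/-- The sum of all the `J`-terms appearing in the triple correlation formula for `U(N)`. -/
def Jsum (N : ℕ) (θ1 θ2 θ3 : ℂ) : ℂ :=
  Ja N (Complex.I * θ1) (Complex.I * θ2) (-(Complex.I * θ3)) +
    Ja N (Complex.I * θ1) (Complex.I * θ3) (-(Complex.I * θ2)) +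
    Ja N (Complex.I * θ2) (Complex.I * θ3) (-(Complex.I * θ1)) +
    Ja N (-(Complex.I * θ1)) (-(Complex.I * θ2)) (Complex.I * θ3) +
    Ja N (-(Complex.I * θ1)) (-(Complex.I * θ3)) (Complex.I * θ2) +
    Ja N (-(Complex.I * θ2)) (-(Complex.I * θ3)) (Complex.I * θ1) +
    (N : ℂ) * (Jb N (-(Complex.I * θ1)) (Complex.I * θ3) +
      Jb N (-(Complex.I * θ2)) (Complex.I * θ3) +
      Jb N (-(Complex.I * θ1)) (Complex.I * θ2) +
      Jb N (-(Complex.I * θ3)) (Complex.I * θ2) +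
      Jb N (-(Complex.I * θ2)) (Complex.I * θ1) +
      Jb N (-(Complex.I * θ3)) (Complex.I * θ1)) +
    (N : ℂ) ^ 3

/-- Laurent polynomials in `N` variables. -/
abbrev LA (N : ℕ) := AddMonoidAlgebra ℂ (Fin N → ℤ)

/-- diagonal operators -/
def Dg {N : ℕ} (w : (Fin N → ℤ) → ℂ) : LA N →ₗ[ℂ] LA N where
  toFun u := AddMonoidAlgebra.ofCoeff
    (Finsupp.onFinset u.coeff.support (fun κ => w κ * u.coeff κ) (by
      intro κ h
      simp only [Finsupp.mem_support_iff]
      intro h0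
      simp [h0] at h))
  map_add' u v := by
    ext κ; simp [mul_add]
  map_smul' c u := by
    ext κ; simp [mul_left_comm]

lemma Dg_coeff {N : ℕ} (w : (Fin N → ℤ) → ℂ) (u : LA N) (κ : Fin N → ℤ) :
    (Dg w u).coeff κ = w κ * u.coeff κ := rfl

lemma Dg_single {N : ℕ} (w : (Fin N → ℤ) → ℂ) (κ : Fin N → ℤ) (c : ℂ) :
    Dg w (AddMonoidAlgebra.single κ c) = AddMonoidAlgebra.single κ (w κ * c) := by
  ext κ'
  rw [Dg_coeff]
  by_cases h : κ = κ'
  · subst h; simp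
  · simp [Finsupp.single_apply, h]

/-- The derivation `z_j ∂_j`. -/
def dl {N : ℕ} (j : Fin N) : LA N →ₗ[ℂ] LA N := Dg (fun κ => (κ j : ℂ))

/-- The monomial `z_j ^ a`. -/
def zz {N : ℕ} (j : Fin N) (a : ℤ) : LA N := AddMonoidAlgebra.single (Pi.single j a) 1

/-- Power sums. -/
def pp (N : ℕ) (a : ℤ) : LA N := ∑ j, zz j a

lemma zz_mul {N : ℕ} (j : Fin N) (a b : ℤ) : zz j a * zz j b = zz j (a + b) := by
  simp [zz, AddMonoidAlgebra.single_mul_single, Pi.single_add]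

lemma zz_zero {N : ℕ} (j : Fin N) : zz j 0 = 1 := by
  simp [zz, AddMonoidAlgebra.one_def]

lemma pp_zero (N : ℕ) : pp N 0 = (N : LA N) := by
  simp [pp, zz_zero]

lemma dl_mul {N : ℕ} (j : Fin N) (u v : LA N) : dl j (u * v) = dl j u * v + u * dl j v := by
  induction u using AddMonoidAlgebra.induction_linear with
  | zero => simp
  | add a b ha hb => simp only [add_mul, map_add, ha, hb]; ring
  | single κ c =>
    induction v using AddMonoidAlgebra.induction_linear with
    | zero => simp
    | add a b ha hb => simp only [mul_add, map_add, ha, hb]; ring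
    | single κ' c' =>
      simp only [dl, Dg_single, AddMonoidAlgebra.single_mul_single,
        ← AddMonoidAlgebra.single_add]
      congr 1
      simp
      ring

lemma dl_one {N : ℕ} (j : Fin N) : dl j (1 : LA N) = 0 := by
  rw [AddMonoidAlgebra.one_def, dl, Dg_single]
  simp

lemma dl_zz {N : ℕ} (j k : Fin N) (a : ℤ) :
    dl j (zz k a) = if j = k then (a : ℂ) • zz j a else 0 := by
  rw [dl, zz, Dg_single]
  split_ifs with h
  · subst h; simp [zz]
  · simp [h]

lemma dl_pp {N : ℕ} (j : Fin N) (a : ℤ) : dl j (pp N a) = (a : ℂ) • zz j a := by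
  simp [pp, map_sum, dl_zz]

/-- signed sum over `0 ≤ m < a` -/
def SS {B : Type*} [AddCommGroup B] (a : ℤ) (φ : ℤ → B) : B :=
  ∑ m ∈ Finset.Ico 0 a, φ m - ∑ m ∈ Finset.Ico a 0, φ m

lemma SS_zero {B : Type*} [AddCommGroup B] (φ : ℤ → B) : SS 0 φ = 0 := by simp [SS]

lemma SS_succ {B : Type*} [AddCommGroup B] (a : ℤ) (φ : ℤ → B) :
    SS (a + 1) φ = SS a φ + φ a := by
  rcases le_or_gt 0 a with h | h
  · have h1 : Finset.Ico (a + 1) 0 = ∅ := by simp; omega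
    have h2 : Finset.Ico a 0 = ∅ := by simp; omega
    have h3 : Finset.Ico 0 (a + 1) = insert a (Finset.Ico 0 a) := by
      ext x; simp; omega
    rw [SS, SS, h1, h2, h3, Finset.sum_insert (by simp)]
    simp; abel
  · have h1 : Finset.Ico 0 (a + 1) = ∅ := by simp; omega
    have h2 : Finset.Ico 0 a = ∅ := by simp; omega
    have h3 : Finset.Ico a 0 = insert a (Finset.Ico (a + 1) 0) := by
      ext x; simp; omega
    rw [SS, SS, h1, h2, h3, Finset.sum_insert (by simp)]
    simp

lemma SS_map {B C : Type*} [AddCommGroup B] [AddCommGroup C] (L : B →+ C) (a : ℤ) (φ : ℤ → B) :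
    L (SS a φ) = SS a (fun m => L (φ m)) := by
  simp [SS, map_sub, map_sum]

lemma SS_sum {B ι : Type*} [AddCommGroup B] (s : Finset ι) (a : ℤ) (φ : ι → ℤ → B) :
    ∑ i ∈ s, SS a (φ i) = SS a (fun m => ∑ i ∈ s, φ i m) := by
  simp only [SS, Finset.sum_sub_distrib]
  rw [Finset.sum_comm, Finset.sum_comm (s := s) (t := Finset.Ico a 0)]

lemma SS_add {B : Type*} [AddCommGroup B] (a : ℤ) (φ ψ : ℤ → B) :
    SS a φ + SS a ψ = SS a (fun m => φ m + ψ m) := by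
  simp only [SS, Finset.sum_add_distrib]; abel

lemma SS_const {B : Type*} [AddCommGroup B] (a : ℤ) (b : B) : SS a (fun _ => b) = a • b := by
  induction a using Int.induction_on with
  | zero => simp [SS_zero]
  | succ n ih => rw [SS_succ, ih, add_smul, one_smul]
  | pred n ih =>
    have := SS_succ (-(n : ℤ) - 1) (fun _ => b)
    rw [sub_add_cancel, ih] at this
    rw [sub_smul, one_smul, this]; simp

/-- induction principle: two functions with the same increments. -/
lemma int_ext {B : Type*} [AddCommGroup B] (f g : ℤ → B) (h0 : f 0 = g 0)
    (h : ∀ a, f (a + 1) - f a = g (a + 1) - g a) (a : ℤ) : f a = g a := by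
  induction a using Int.induction_on with
  | zero => exact h0
  | succ n ih => have := h n; rw [ih] at this; exact sub_left_injective this
  | pred n ih =>
    have := h (-(n : ℤ) - 1); rw [sub_add_cancel, ih] at this
    exact sub_right_injective this

lemma zz_geom {N : ℕ} (i k : Fin N) (a : ℤ) :
    zz k a - zz i a = (zz k 1 - zz i 1) * SS a (fun m => zz k m * zz i (a - 1 - m)) := by
  have key : ∀ c : ℤ, (zz k 1 - zz i 1) * SS a (fun m => zz k m * zz i (c - 1 - m)) =
      zz k a * zz i (c - a) - zz i c := by
    intro c
    refine int_ext (fun a => (zz k 1 - zz i 1) * SS a (fun m => zz k m * zz i (c - 1 - m)))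
      (fun a => zz k a * zz i (c - a) - zz i c) ?_ ?_ a
    · simp [SS_zero, zz_zero]
    · intro b
      have e1 : zz k (b + 1) = zz k b * zz k 1 := (zz_mul _ _ _).symm
      have e2 : zz i (c - b) = zz i (c - 1 - b) * zz i 1 := by rw [zz_mul]; congr 1; ring
      have e3 : c - (b + 1) = c - 1 - b := by ring
      simp only [SS_succ]
      rw [e1, e2, e3]; ring
  rw [key a]; simp [zz_zero]

lemma SS_reflect {B : Type*} [AddCommGroup B] (a : ℤ) (φ : ℤ → B) :
    SS a (fun m => φ (a - 1 - m)) = SS a φ := by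
  simp only [SS]
  congr 1
  · refine Finset.sum_nbij' (fun m => a - 1 - m) (fun m => a - 1 - m) ?_ ?_ ?_ ?_ ?_ <;>
      simp <;> omega
  · refine Finset.sum_nbij' (fun m => a - 1 - m) (fun m => a - 1 - m) ?_ ?_ ?_ ?_ ?_ <;>
      simp <;> omega

/-- Vandermonde -/
def VV (N : ℕ) : LA N := ∏ i : Fin N, ∏ j ∈ Finset.Ioi i, (zz j 1 - zz i 1)

/-- the point rho -/
def rh (N : ℕ) : Fin N → ℤ := fun j => (j : ℤ)

lemma zz_pow {N : ℕ} (j : Fin N) (n : ℕ) : zz j 1 ^ n = zz j (n : ℤ) := by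
  induction n with
  | zero => simp [zz_zero]
  | succ n ih => rw [pow_succ, ih, zz_mul]; simp

lemma prod_single {N : ℕ} (s : Finset (Fin N)) (κ : Fin N → ℤ) :
    ∏ j ∈ s, zz j (κ j) = AddMonoidAlgebra.single (∑ j ∈ s, Pi.single j (κ j)) (1 : ℂ) := by
  induction s using Finset.induction_on with
  | empty => simp [AddMonoidAlgebra.one_def]
  | insert a s ha ih =>
    rw [Finset.prod_insert ha, ih, zz, AddMonoidAlgebra.single_mul_single, Finset.sum_insert ha]
    simp

lemma prod_zz {N : ℕ} (κ : Fin N → ℤ) :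
    ∏ j, zz j (κ j) = AddMonoidAlgebra.single κ (1 : ℂ) := by
  rw [prod_single, Finset.univ_sum_single]

lemma VV_eq (N : ℕ) : VV N = ∑ σ : Equiv.Perm (Fin N),
    (σ.sign : ℤ) • (AddMonoidAlgebra.single (fun j => ((σ j : Fin N) : ℤ)) (1 : ℂ) : LA N) := by
  rw [VV, ← Matrix.det_vandermonde, ← Matrix.det_transpose, Matrix.det_apply]
  refine Finset.sum_congr rfl fun σ _ => ?_
  rw [← prod_zz]
  simp only [Matrix.vandermonde, Matrix.transpose_apply, Matrix.of_apply, zz_pow]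
  rfl

/-- permutation action -/
def ac {N : ℕ} (σ : Equiv.Perm (Fin N)) : LA N →ₐ[ℂ] LA N :=
  AddMonoidAlgebra.mapDomainAlgHom ℂ ℂ
    (⟨⟨fun κ => κ ∘ σ, rfl⟩, fun _ _ => rfl⟩ : (Fin N → ℤ) →+ (Fin N → ℤ))

lemma ac_single {N : ℕ} (σ : Equiv.Perm (Fin N)) (κ : Fin N → ℤ) (c : ℂ) :
    ac σ (AddMonoidAlgebra.single κ c) = AddMonoidAlgebra.single (κ ∘ σ) c := by
  simp [ac]

lemma ac_coeff {N : ℕ} (σ : Equiv.Perm (Fin N)) (u : LA N) (κ : Fin N → ℤ) :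
    (ac σ u).coeff (κ ∘ σ) = u.coeff κ := by
  have hinj : Function.Injective (fun κ : Fin N → ℤ => κ ∘ σ) :=
    σ.surjective.injective_comp_right
  induction u using AddMonoidAlgebra.induction_linear with
  | zero => simp
  | add a b ha hb => simp [ha, hb]
  | single κ' c =>
    rw [ac_single]
    simp only [AddMonoidAlgebra.coeff_single, Finsupp.single_apply]
    congr 1
    exact propext hinj.eq_iff

lemma ac_pp {N : ℕ} (σ : Equiv.Perm (Fin N)) (a : ℤ) : ac σ (pp N a) = pp N a := by
  simp only [pp, map_sum, zz, ac_single]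
  rw [← Equiv.sum_comp σ]
  refine Finset.sum_congr rfl fun j _ => ?_
  congr 1
  ext k
  simp only [Function.comp, Pi.single_apply, σ.injective.eq_iff]

lemma ac_VV {N : ℕ} (σ : Equiv.Perm (Fin N)) : ac σ (VV N) = (σ.sign : ℤ) • VV N := by
  rw [VV_eq, map_sum, Finset.smul_sum]
  rw [← Equiv.sum_comp (Equiv.mulRight σ)
    (fun τ => (σ.sign : ℤ) • (τ.sign : ℤ) • (AddMonoidAlgebra.single (fun j => ((τ j : Fin N) : ℤ)) (1 : ℂ) : LA N))]
  refine Finset.sum_congr rfl fun τ _ => ?_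
  rw [map_zsmul, ac_single]
  simp only [Equiv.coe_mulRight, Equiv.Perm.sign_mul, Units.val_mul, smul_smul]
  congr 1
  have : ((σ.sign : ℤˣ) : ℤ) * (σ.sign : ℤ) = 1 := by
    rw [← Units.val_mul, Int.units_mul_self]; rfl
  linear_combination (-(τ.sign : ℤ)) * this

lemma VV_rh (N : ℕ) : (VV N).coeff (rh N) = 1 := by
  rw [VV_eq, AddMonoidAlgebra.coeff_sum, Finsupp.finsetSum_apply]
  rw [Finset.sum_eq_single 1]
  · change ((Equiv.Perm.sign (1 : Equiv.Perm (Fin N)) : ℤ) • AddMonoidAlgebra.single (rh N) (1 : ℂ)).coeff (rh N) = 1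
    simp
  · intro σ _ h
    have : (fun j => ((σ j : Fin N) : ℤ)) ≠ rh N := by
      intro h'
      apply h
      ext j
      have := congrFun h' j
      simpa [rh] using this
    simp [this]
  · simp

/-- The Casimir weight. -/
def qq {N : ℕ} (κ : Fin N → ℤ) : ℤ := ∑ j, κ j * (κ j - ((N : ℤ) - 1))

lemma qq_perm {N : ℕ} (κ : Fin N → ℤ) (σ : Equiv.Perm (Fin N)) : qq (κ ∘ σ) = qq κ := by
  simp only [qq, Function.comp]
  exact Equiv.sum_comp σ (fun j => κ j * (κ j - ((N : ℤ) - 1)))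

lemma qq_min {N : ℕ} (κ : Fin N → ℤ) (hκ : Function.Injective κ) (h : qq κ = qq (rh N)) :
    ∃ σ : Equiv.Perm (Fin N), κ = rh N ∘ σ := by
  set T := Finset.univ.image κ with hT
  set R := Finset.Ico (0 : ℤ) N with hR
  let φ : ℤ → ℤ := fun k => k * (k - ((N : ℤ) - 1))
  have hrinj : Function.Injective (rh N) := fun i j hij => by
    ext; simpa [rh] using hij
  have e1 : qq κ = ∑ k ∈ T, φ k := by
    rw [hT, Finset.sum_image (fun _ _ _ _ h => hκ h)]; rfl
  have hRim : R = Finset.univ.image (rh N) := by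
    ext k
    simp only [hR, Finset.mem_Ico, Finset.mem_image, Finset.mem_univ, true_and, rh]
    constructor
    · rintro ⟨h1, h2⟩
      exact ⟨⟨k.toNat, by omega⟩, by simp; omega⟩
    · rintro ⟨j, rfl⟩
      have := j.2
      omega
  have e2 : qq (rh N) = ∑ k ∈ R, φ k := by
    rw [hRim, Finset.sum_image (fun _ _ _ _ h => hrinj h)]; rfl
  have hcard : T.card = R.card := by
    rw [hRim, hT, Finset.card_image_of_injective _ hκ, Finset.card_image_of_injective _ hrinj]
  have s1 := Finset.sum_inter_add_sum_sdiff T R φ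
  have s2 := Finset.sum_inter_add_sum_sdiff R T φ
  rw [Finset.inter_comm] at s2
  have hTR : T \ R = ∅ := by
    by_contra hne
    have hne' := Finset.nonempty_iff_ne_empty.mpr hne
    have pos : 0 < ∑ k ∈ T \ R, φ k := by
      refine Finset.sum_pos (fun k hk => ?_) hne'
      simp only [Finset.mem_sdiff, hR, Finset.mem_Ico, not_and, not_lt] at hk
      simp only [φ]
      have hN0 : 0 < N := by
        obtain ⟨j, -, -⟩ := Finset.mem_image.mp hk.1
        exact j.pos
      rcases lt_or_ge k 0 with h0 | h0
      · exact mul_pos_of_neg_of_neg h0 (by omega)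
      · have := hk.2 h0
        exact mul_pos (by omega) (by omega)
    have neg : ∑ k ∈ R \ T, φ k ≤ 0 := by
      refine Finset.sum_nonpos (fun k hk => ?_)
      simp only [Finset.mem_sdiff, hR, Finset.mem_Ico] at hk
      simp only [φ]
      exact mul_nonpos_of_nonneg_of_nonpos hk.1.1 (by omega)
    omega
  have hTeq : T = R := Finset.eq_of_subset_of_card_le (Finset.sdiff_eq_empty_iff_subset.mp hTR) hcard.ge
  have hmem : ∀ j, ∃ i, rh N i = κ j := by
    intro j
    have : κ j ∈ R := by rw [← hTeq, hT]; simp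
    rw [hRim] at this
    simpa using this
  choose s hs using hmem
  have hsinj : Function.Injective s := fun i j hij => hκ (by rw [← hs, ← hs, hij])
  refine ⟨Equiv.ofBijective s (Finite.injective_iff_bijective.mp hsinj), ?_⟩
  ext j
  simp [hs]

/-- The shifted Casimir operator. -/
def MM (N : ℕ) : LA N →ₗ[ℂ] LA N := Dg (fun κ => ((qq κ - qq (rh N) : ℤ) : ℂ))

lemma MM_eq {N : ℕ} (u : LA N) : MM N u =
    ∑ j, (dl j (dl j u) - ((N : ℂ) - 1) • dl j u) - (qq (rh N) : ℂ) • u := by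
  ext κ
  simp only [MM, Dg_coeff, AddMonoidAlgebra.coeff_sub, AddMonoidAlgebra.coeff_sum,
    AddMonoidAlgebra.coeff_smul, Finsupp.sub_apply, Finsupp.finsetSum_apply, Finsupp.smul_apply,
    dl, smul_eq_mul]
  rw [Int.cast_sub, sub_mul, qq]
  push_cast
  rw [Finset.sum_mul]
  congr 1
  refine Finset.sum_congr rfl fun j _ => ?_
  ring

lemma MM_VV (N : ℕ) : MM N (VV N) = 0 := by
  rw [VV_eq, map_sum]
  refine Finset.sum_eq_zero fun σ _ => ?_
  rw [map_zsmul, MM, Dg_single]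
  have : qq (fun j => ((σ j : Fin N) : ℤ)) = qq (rh N) := qq_perm (rh N) σ
  simp [this]

/-- vector field `∑ z_j^a z_j ∂_j`. -/
def XX {N : ℕ} (a : ℤ) (u : LA N) : LA N := ∑ j, zz j a * dl j u

lemma XX_mul {N : ℕ} (a : ℤ) (u v : LA N) : XX a (u * v) = XX a u * v + u * XX a v := by
  simp only [XX, dl_mul, Finset.sum_mul, Finset.mul_sum, ← Finset.sum_add_distrib]
  refine Finset.sum_congr rfl fun j _ => by ring

lemma XX_prod {N : ℕ} {ι : Type*} (a : ℤ) (s : Finset ι) (u h : ι → LA N)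
    (H : ∀ i ∈ s, XX a (u i) = h i * u i) :
    XX a (∏ i ∈ s, u i) = (∑ i ∈ s, h i) * ∏ i ∈ s, u i := by
  induction s using Finset.induction_on with
  | empty => simp [XX, dl_one]
  | insert i s hi ih =>
    rw [Finset.prod_insert hi, Finset.sum_insert hi, XX_mul,
      ih (fun k hk => H k (Finset.mem_insert_of_mem hk)), H i (Finset.mem_insert_self _ _)]
    ring

/-- complete sum -/
def hh {N : ℕ} (a : ℤ) (k i : Fin N) : LA N := SS (a + 1) (fun m => zz k m * zz i (a - m))

lemma hh_symm {N : ℕ} (a : ℤ) (k i : Fin N) : hh a k i = hh a i k := by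
  rw [hh, ← SS_reflect, hh]
  congr 1
  ext1 m
  rw [mul_comm]
  congr 2 <;> ring

lemma XX_zz {N : ℕ} (a b : ℤ) (k : Fin N) : XX a (zz k b) = (b : ℂ) • zz k (a + b) := by
  simp only [XX, dl_zz, mul_ite, mul_zero]
  rw [Finset.sum_ite_eq']
  simp [zz_mul]

lemma XX_sub {N : ℕ} (a : ℤ) (u v : LA N) : XX a (u - v) = XX a u - XX a v := by
  simp [XX, mul_sub]

lemma XX_diff {N : ℕ} (a : ℤ) (k i : Fin N) :
    XX a (zz k 1 - zz i 1) = hh a k i * (zz k 1 - zz i 1) := by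
  rw [XX_sub, XX_zz, XX_zz]
  simp only [Int.cast_one, one_smul]
  rw [zz_geom, mul_comm, hh]
  congr 2
  ext1 m
  congr 2; ring

lemma XX_VV (N : ℕ) (a : ℤ) :
    XX a (VV N) = (∑ i : Fin N, ∑ k ∈ Finset.Ioi i, hh a k i) * VV N := by
  rw [VV]
  apply XX_prod
  intro i _
  apply XX_prod
  intro k _
  exact XX_diff a k i

/-- divergence -/
def dv (N : ℕ) (a : ℤ) : LA N := SS a (fun m => pp N m * pp N (a - m))

lemma hh_diag {N : ℕ} (a : ℤ) (k : Fin N) : hh a k k = ((a : ℂ) + 1) • zz k a := by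
  have : (fun m => zz k m * zz k (a - m)) = fun _ => zz k a := by
    ext1 m; rw [zz_mul]; congr 1; ring
  rw [hh, this, SS_const, ← Int.cast_smul_eq_zsmul ℂ]
  push_cast; rfl

lemma sum_hh (N : ℕ) (a : ℤ) :
    (2 : ℂ) • ∑ i : Fin N, ∑ k ∈ Finset.Ioi i, hh a k i =
      dv N a + (N : ℂ) • pp N a - ((a : ℂ) + 1) • pp N a := by
  have h1 : ∑ i : Fin N, ∑ k : Fin N, hh a k i = dv N a + (N : ℂ) • pp N a := by
    simp only [hh, SS_sum]
    rw [SS_succ]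
    congr 1
    · rw [dv]
      congr 1
      ext1 m
      rw [pp, pp, Finset.sum_mul_sum, Finset.sum_comm]
    · simp only [sub_self, zz_zero, mul_one]
      simp [pp, Nat.cast_smul_eq_nsmul]
  have h2 : ∑ i : Fin N, hh a i i = ((a : ℂ) + 1) • pp N a := by
    simp only [hh_diag, pp, Finset.smul_sum]
  have h3 : ∑ i : Fin N, ∑ k : Fin N, hh a k i =
      ∑ i : Fin N, (∑ k ∈ Finset.Ioi i, hh a k i + ∑ k ∈ Finset.Iio i, hh a k i + hh a i i) := by
    refine Finset.sum_congr rfl fun i _ => ?_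
    rw [← Finset.sum_union]
    · rw [add_comm, ← Finset.sum_insert (f := fun k => hh a k i)]
      · refine Finset.sum_congr ?_ fun _ _ => rfl
        ext k
        simp only [Finset.mem_univ, Finset.mem_insert, Finset.mem_union, Finset.mem_Ioi,
          Finset.mem_Iio, true_iff]
        rcases lt_trichotomy k i with h | h | h <;> tauto
      · simp
    · rw [Finset.disjoint_left]; intro k hk; simp at hk ⊢; exact hk.le
  have h4 : ∑ i : Fin N, ∑ k ∈ Finset.Iio i, hh a k i = ∑ i : Fin N, ∑ k ∈ Finset.Ioi i, hh a k i := by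
    rw [Finset.sum_comm' (t' := Finset.univ) (s' := fun k => Finset.Ioi k) (by simp)]
    refine Finset.sum_congr rfl fun i _ => Finset.sum_congr rfl fun k _ => hh_symm _ _ _
  rw [Finset.sum_add_distrib, Finset.sum_add_distrib, h4, h2] at h3
  rw [two_smul, ← h1, h3]; abel

/-- derivative data -/
inductive GD {N : ℕ} : LA N → List (ℤ × LA N) → Prop
  | cst (r : ℂ) : GD (algebraMap ℂ (LA N) r) []
  | pw (b : ℤ) : GD (pp N b) [(b, algebraMap ℂ (LA N) b)]
  | add {g h : LA N} {l l' : List (ℤ × LA N)} : GD g l → GD h l' → GD (g + h) (l ++ l')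
  | mul {g h : LA N} {l l' : List (ℤ × LA N)} : GD g l → GD h l' →
      GD (g * h) (l.map (fun p => (p.1, p.2 * h)) ++ l'.map (fun p => (p.1, g * p.2)))

/-- The algebra of power sums. -/
def GG (N : ℕ) : Subalgebra ℂ (LA N) := Algebra.adjoin ℂ (Set.range (pp N))

lemma pp_mem {N : ℕ} (a : ℤ) : pp N a ∈ GG N := Algebra.subset_adjoin ⟨a, rfl⟩

lemma GD_exists {N : ℕ} {g : LA N} (hg : g ∈ GG N) : ∃ l, GD g l := by
  induction hg using Algebra.adjoin_induction with
  | mem x hx => obtain ⟨a, rfl⟩ := hx; exact ⟨_, GD.pw a⟩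
  | algebraMap r => exact ⟨_, GD.cst r⟩
  | add x y _ _ hx hy => obtain ⟨l, hl⟩ := hx; obtain ⟨l', hl'⟩ := hy; exact ⟨_, hl.add hl'⟩
  | mul x y _ _ hx hy => obtain ⟨l, hl⟩ := hx; obtain ⟨l', hl'⟩ := hy; exact ⟨_, hl.mul hl'⟩

lemma GD_mem {N : ℕ} {g : LA N} {l : List (ℤ × LA N)} (h : GD g l) :
    g ∈ GG N ∧ ∀ p ∈ l, p.2 ∈ GG N := by
  induction h with
  | cst r => exact ⟨Subalgebra.algebraMap_mem _ _, fun p hp => by simp at hp⟩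
  | pw b =>
    refine ⟨pp_mem _, fun p hp => ?_⟩
    rw [List.mem_singleton.mp hp]
    exact Subalgebra.algebraMap_mem _ _
  | add _ _ h1 h2 =>
    refine ⟨add_mem h1.1 h2.1, fun p hp => ?_⟩
    rcases List.mem_append.mp hp with h | h
    · exact h1.2 p h
    · exact h2.2 p h
  | mul _ _ h1 h2 =>
    refine ⟨mul_mem h1.1 h2.1, fun p hp => ?_⟩
    rcases List.mem_append.mp hp with h | h
    · obtain ⟨q, hq, rfl⟩ := List.mem_map.mp h
      exact mul_mem (h1.2 q hq) h2.1
    · obtain ⟨q, hq, rfl⟩ := List.mem_map.mp h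
      exact mul_mem h1.1 (h2.2 q hq)

lemma GD_dl {N : ℕ} {g : LA N} {l : List (ℤ × LA N)} (h : GD g l) (j : Fin N) :
    dl j g = (l.map (fun p => zz j p.1 * p.2)).sum := by
  induction h with
  | cst r => simp [Algebra.algebraMap_eq_smul_one, dl_one]
  | pw b =>
    rw [dl_pp, List.map_singleton, List.sum_singleton, Algebra.smul_def, mul_comm]
  | add _ _ h1 h2 => simp [h1, h2]
  | mul _ _ h1 h2 =>
    simp only [dl_mul, h1, h2, List.map_append, List.sum_append, List.map_map]
    rw [← List.sum_map_mul_right, ← List.sum_map_mul_left]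
    congr 2
    · congr 1; ext1 p; simp [mul_assoc]
    · congr 1; ext1 p; simp [mul_left_comm]

lemma ac_GG {N : ℕ} {g : LA N} (hg : g ∈ GG N) (σ : Equiv.Perm (Fin N)) : ac σ g = g := by
  induction hg using Algebra.adjoin_induction with
  | mem x hx => obtain ⟨a, rfl⟩ := hx; exact ac_pp σ a
  | algebraMap r => exact AlgHom.commutes _ _
  | add x y _ _ hx hy => simp [hx, hy]
  | mul x y _ _ hx hy => simp [hx, hy]

/-- loop expression -/
def loopE {N : ℕ} (a : ℤ) (g : LA N) : LA N := dv N a * g + XX a g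

/-- second order operator on derivative data -/
def DD {N : ℕ} (l : List (ℤ × LA N)) : LA N := (l.map (fun p => loopE p.1 p.2)).sum

lemma key_term {N : ℕ} (a : ℤ) (c : LA N) :
    ∑ j, ((2 : ℂ) • (dl j (VV N) * (zz j a * c)) + VV N * dl j (zz j a * c)
      - ((N : ℂ) - 1) • (VV N * (zz j a * c))) = VV N * loopE a c := by
  have h1 : ∑ j, dl j (VV N) * (zz j a * c) = XX a (VV N) * c := by
    simp only [XX, Finset.sum_mul]
    refine Finset.sum_congr rfl fun j _ => by ring
  have h2 : ∑ j, VV N * dl j (zz j a * c) = VV N * ((a : ℂ) • (pp N a * c) + XX a c) := by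
    simp only [dl_mul, dl_zz, if_true, XX, pp, Finset.sum_mul, Finset.smul_sum, Finset.mul_sum,
      ← Finset.sum_add_distrib]
    refine Finset.sum_congr rfl fun j _ => ?_
    rw [smul_mul_assoc]
  have h3 : ∑ j, (VV N * (zz j a * c)) = VV N * (pp N a * c) := by
    simp only [pp, Finset.sum_mul, Finset.mul_sum]
  have h4 := sum_hh N a
  rw [Finset.sum_sub_distrib, Finset.sum_add_distrib, ← Finset.smul_sum, ← Finset.smul_sum, h1, h2,
    h3, XX_VV, loopE]
  have h5 : (2 : ℂ) • ((∑ i : Fin N, ∑ k ∈ Finset.Ioi i, hh a k i) * VV N * c) =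
    ((2 : ℂ) • (∑ i : Fin N, ∑ k ∈ Finset.Ioi i, hh a k i)) * VV N * c := by
    simp only [smul_mul_assoc]
  rw [h5, h4]
  simp only [Algebra.smul_def, map_add, map_sub, map_one]
  ring

lemma key_list {N : ℕ} (l : List (ℤ × LA N)) :
    ∑ j, ((2 : ℂ) • (dl j (VV N) * (l.map (fun p => zz j p.1 * p.2)).sum)
      + VV N * dl j (l.map (fun p => zz j p.1 * p.2)).sum
      - ((N : ℂ) - 1) • (VV N * (l.map (fun p => zz j p.1 * p.2)).sum)) = VV N * DD l := by
  induction l with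
  | nil => simp [DD]
  | cons p l ih =>
    have : VV N * DD (p :: l) = VV N * loopE p.1 p.2 + VV N * DD l := by
      simp [DD, mul_add]
    rw [this, ← ih, ← key_term, ← Finset.sum_add_distrib]
    refine Finset.sum_congr rfl fun j _ => ?_
    simp only [List.map_cons, List.sum_cons, map_add, mul_add, smul_add]
    abel

lemma MM_GD {N : ℕ} {g : LA N} {l : List (ℤ × LA N)} (h : GD g l) :
    MM N (VV N * g) = VV N * DD l := by
  have h0 := MM_VV N
  rw [MM_eq] at h0
  rw [MM_eq, ← key_list]
  have h1 : ∀ j, (l.map (fun p => zz j p.1 * p.2)).sum = dl j g := fun j => (GD_dl h j).symm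
  simp only [h1]
  have h2 : (qq (rh N) : ℂ) • (VV N * g) =
      (∑ j, (dl j (dl j (VV N)) - ((N : ℂ) - 1) • dl j (VV N))) * g := by
    rw [sub_eq_zero.mp h0, smul_mul_assoc]
  rw [h2, Finset.sum_mul, ← Finset.sum_sub_distrib]
  refine Finset.sum_congr rfl fun j _ => ?_
  simp only [dl_mul, map_add, Algebra.smul_def]
  rw [map_ofNat]
  ring

lemma VV_ne (N : ℕ) : VV N ≠ 0 := by
  intro h
  have := VV_rh N
  rw [h] at this
  simp at this

lemma anti_coeff {N : ℕ} {g : LA N} (hg : g ∈ GG N) (σ : Equiv.Perm (Fin N)) (κ : Fin N → ℤ) :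
    (VV N * g).coeff κ = (σ.sign : ℤ) • (VV N * g).coeff (κ ∘ σ) := by
  rw [← ac_coeff σ, map_mul, ac_GG hg, ac_VV, smul_mul_assoc]
  rfl

lemma anti_inj {N : ℕ} {g : LA N} (hg : g ∈ GG N) (κ : Fin N → ℤ)
    (h : (VV N * g).coeff κ ≠ 0) : Function.Injective κ := by
  intro i j hij
  by_contra hne
  apply h
  have := anti_coeff hg (Equiv.swap i j) κ
  have e : κ ∘ Equiv.swap i j = κ := by
    ext k
    simp only [Function.comp]
    rcases eq_or_ne k i with rfl | h1
    · simp [hij]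
    · rcases eq_or_ne k j with rfl | h2
      · simp [hij]
      · rw [Equiv.swap_apply_of_ne_of_ne h1 h2]
  rw [e, Equiv.Perm.sign_swap hne] at this
  simp at this
  exact self_eq_neg.mp this

lemma base_case {N : ℕ} {g : LA N} (hg : g ∈ GG N)
    (h : ∀ κ, (VV N * g).coeff κ ≠ 0 → qq κ = qq (rh N)) :
    g = algebraMap ℂ (LA N) ((VV N * g).coeff (rh N)) := by
  apply mul_left_cancel₀ (VV_ne N)
  set w := (VV N * g).coeff (rh N) with hw
  have h1 : (1 : LA N) ∈ GG N := one_mem _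
  have hV : ∀ κ, (VV N).coeff κ ≠ 0 → qq κ = qq (rh N) := by
    intro κ hκ
    have := congrArg (fun u => u.coeff κ) (MM_VV N)
    simp only [MM, Dg_coeff, AddMonoidAlgebra.coeff_zero, Finsupp.coe_zero, Pi.zero_apply,
      mul_eq_zero, hκ, or_false, Int.cast_eq_zero] at this
    omega
  ext κ
  rw [mul_comm (VV N) (algebraMap _ _ _), ← Algebra.smul_def, AddMonoidAlgebra.coeff_smul,
    Finsupp.smul_apply, smul_eq_mul]
  by_cases hp : ∃ σ : Equiv.Perm (Fin N), κ = rh N ∘ σ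
  · obtain ⟨σ, rfl⟩ := hp
    have e1 := anti_coeff hg σ (rh N)
    have e2 := anti_coeff h1 σ (rh N)
    rw [mul_one, VV_rh] at e2
    rw [← hw] at e1
    rw [e1]
    rcases Int.units_eq_one_or σ.sign with hs | hs
    · rw [hs] at e2 ⊢; simp at e2 ⊢; rw [← e2]; simp
    · rw [hs] at e2 ⊢; simp at e2 ⊢; linear_combination (VV N * g).coeff (rh N ∘ σ) * e2
  · have a1 : (VV N * g).coeff κ = 0 := by
      by_contra hne
      exact hp (qq_min κ (anti_inj hg κ hne) (h κ hne))
    have a2 : (VV N).coeff κ = 0 := by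
      by_contra hne
      refine hp (qq_min κ (anti_inj h1 κ (by rwa [mul_one])) (hV κ hne))
    rw [a1, a2, mul_zero]

lemma SS_mem {B : Type*} [AddCommGroup B] {S : Type*} [SetLike S B] [AddSubgroupClass S B]
    (s : S) (a : ℤ) (φ : ℤ → B)
    (h : ∀ m, φ m ∈ s) : SS a φ ∈ s :=
  sub_mem (sum_mem fun _ _ => h _) (sum_mem fun _ _ => h _)

lemma XX_GD {N : ℕ} {g : LA N} {l : List (ℤ × LA N)} (h : GD g l) (a : ℤ) :
    XX a g = (l.map (fun p => pp N (a + p.1) * p.2)).sum := by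
  have h1 : ∀ j, dl j g = (l.map (fun p => zz j p.1 * p.2)).sum := GD_dl h
  simp only [XX, h1]
  clear h h1
  induction l with
  | nil => simp
  | cons p l ih =>
    simp only [List.map_cons, List.sum_cons, mul_add, Finset.sum_add_distrib]
    rw [ih]
    congr 1
    simp only [pp, Finset.sum_mul, ← zz_mul, mul_assoc]

lemma loopE_mem {N : ℕ} {g : LA N} (hg : g ∈ GG N) (a : ℤ) : loopE a g ∈ GG N := by
  obtain ⟨l, hl⟩ := GD_exists hg
  refine add_mem (mul_mem (SS_mem _ _ _ fun m => mul_mem (pp_mem _) (pp_mem _)) hg) ?_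
  rw [XX_GD hl]
  refine list_sum_mem fun x hx => ?_
  obtain ⟨p, hp, rfl⟩ := List.mem_map.mp hx
  exact mul_mem (pp_mem _) ((GD_mem hl).2 p hp)

/-- Uniqueness of functionals satisfying the loop equations. -/
theorem weyl {N : ℕ} (Φ : GG N →ₗ[ℂ] ℂ) (h1 : Φ 1 = 1)
    (hloop : ∀ (a : ℤ) (g : LA N) (hg : g ∈ GG N), Φ ⟨loopE a g, loopE_mem hg a⟩ = 0)
    (g : LA N) (hg : g ∈ GG N) : Φ ⟨g, hg⟩ = (VV N * g).coeff (rh N) := by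
  have hDmem : ∀ l : List (ℤ × LA N), (∀ p ∈ l, p.2 ∈ GG N) →
      ∃ h : DD l ∈ GG N, Φ ⟨DD l, h⟩ = 0 := by
    intro l
    induction l with
    | nil =>
      intro _
      refine ⟨by simp [DD], ?_⟩
      have : (⟨DD ([] : List (ℤ × LA N)), by simp [DD]⟩ : GG N) = 0 := by
        ext1; simp [DD]
      rw [this, map_zero]
    | cons p l ih =>
      intro hp
      obtain ⟨h, hz⟩ := ih (fun q hq => hp q (List.mem_cons_of_mem _ hq))
      have hm := hp p List.mem_cons_self
      have e : DD (p :: l) = loopE p.1 p.2 + DD l := by simp [DD]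
      refine ⟨e ▸ add_mem (loopE_mem hm _) h, ?_⟩
      have : (⟨DD (p :: l), e ▸ add_mem (loopE_mem hm _) h⟩ : GG N) =
        ⟨loopE p.1 p.2, loopE_mem hm _⟩ + ⟨DD l, h⟩ := by ext1; exact e
      rw [this, map_add, hz, hloop _ _ hm, add_zero]
  have main : ∀ (Λ : Finset ℤ) (g : LA N) (hg : g ∈ GG N),
      (∀ κ, (VV N * g).coeff κ ≠ 0 → qq κ - qq (rh N) = 0 ∨ qq κ - qq (rh N) ∈ Λ) →
      Φ ⟨g, hg⟩ = (VV N * g).coeff (rh N) := by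
    intro Λ
    induction Λ using Finset.induction_on with
    | empty =>
      intro g hg h
      have := base_case hg (fun κ hκ => by have := h κ hκ; simp at this; omega)
      set w := (VV N * g).coeff (rh N)
      have e : (⟨g, hg⟩ : GG N) = w • 1 := by
        ext1; simp only; rw [this, Algebra.algebraMap_eq_smul_one]; rfl
      rw [e, map_smul, h1]; simp
    | insert x Λ hx ih =>
      intro g hg h
      by_cases hx0 : x = 0
      · refine ih g hg fun κ hκ => ?_
        rcases h κ hκ with h | h
        · exact Or.inl h
        · rcases Finset.mem_insert.mp h with h | h
          · exact Or.inl (h.trans hx0)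
          · exact Or.inr h
      obtain ⟨l, hl⟩ := GD_exists hg
      obtain ⟨hm, hz⟩ := hDmem l (GD_mem hl).2
      have hx0' : (x : ℂ) ≠ 0 := by exact_mod_cast hx0
      have hc : ∀ κ, (VV N * (g - (x : ℂ)⁻¹ • DD l)).coeff κ =
          (1 - (x : ℂ)⁻¹ * ((qq κ - qq (rh N) : ℤ) : ℂ)) * (VV N * g).coeff κ := by
        intro κ
        rw [mul_sub, mul_smul_comm, ← MM_GD hl]
        simp only [AddMonoidAlgebra.coeff_sub, AddMonoidAlgebra.coeff_smul, Finsupp.sub_apply,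
          Finsupp.smul_apply, MM, Dg_coeff, smul_eq_mul]
        ring
      have hg' : g - (x : ℂ)⁻¹ • DD l ∈ GG N := sub_mem hg (Subalgebra.smul_mem _ hm _)
      have := ih _ hg' (by
        intro κ hκ
        rw [hc] at hκ
        rcases h κ (right_ne_zero_of_mul hκ) with h | h
        · exact Or.inl h
        · rcases Finset.mem_insert.mp h with h | h
          · exfalso
            apply left_ne_zero_of_mul hκ
            rw [h, inv_mul_cancel₀ hx0', sub_self]
          · exact Or.inr h)
      rw [hc] at this
      simp only [sub_self, Int.cast_zero, mul_zero, sub_zero, one_mul] at this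
      rw [← this]
      have e : (⟨g - (x : ℂ)⁻¹ • DD l, hg'⟩ : GG N) = ⟨g, hg⟩ - (x : ℂ)⁻¹ • ⟨DD l, hm⟩ := rfl
      rw [e, map_sub, map_smul, hz, smul_zero, sub_zero]
  refine main ((VV N * g).coeff.support.image (fun κ => qq κ - qq (rh N))) g hg fun κ hκ => ?_
  right
  exact Finset.mem_image_of_mem _ (Finsupp.mem_support_iff.mpr hκ)

lemma det_aeval {N : ℕ} (A : Matrix (Fin N) (Fin N) ℂ) (c : Fin N → ℂ)
    (h : A.charpoly = ∏ j, (Polynomial.X - Polynomial.C (c j))) (p : Polynomial ℂ) :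
    (Polynomial.aeval A p).det = ∏ j, p.eval (c j) := by
  have hlin : ∀ r : ℂ, (Polynomial.aeval A (Polynomial.X - Polynomial.C r)).det =
      ∏ j, (Polynomial.X - Polynomial.C r).eval (c j) := by
    intro r
    have h1 := congrArg (Polynomial.eval r) h
    rw [Matrix.eval_charpoly, Polynomial.eval_prod] at h1
    have h2 : Polynomial.aeval A (Polynomial.X - Polynomial.C r) = -(Matrix.scalar (Fin N) r - A) := by
      simp [Algebra.algebraMap_eq_smul_one, Matrix.smul_one_eq_diagonal]
    rw [h2, Matrix.det_neg, h1]
    simp only [Polynomial.eval_sub, Polynomial.eval_X, Polynomial.eval_C]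
    rw [← Finset.card_univ, ← Finset.prod_const, ← Finset.prod_mul_distrib]
    refine Finset.prod_congr rfl fun j _ => by ring
  have hs := IsAlgClosed.splits p
  rw [hs.eq_prod_roots]
  generalize p.roots = m
  generalize p.leadingCoeff = l
  induction m using Multiset.induction_on with
  | empty =>
    simp [Algebra.algebraMap_eq_smul_one]
  | cons r m ih =>
    rw [Multiset.map_cons, Multiset.prod_cons, mul_left_comm, map_mul, Matrix.det_mul, ih, hlin]
    simp [Finset.prod_mul_distrib]

lemma trace_pow_of_charpoly {N : ℕ} (A : Matrix (Fin N) (Fin N) ℂ) (c : Fin N → ℂ)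
    (h : A.charpoly = ∏ j, (Polynomial.X - Polynomial.C (c j))) (k : ℕ) :
    (A ^ k).trace = ∑ j, c j ^ k := by
  have h2 : (A ^ k).charpoly = ∏ j, (Polynomial.X - Polynomial.C (c j ^ k)) := by
    apply Polynomial.funext
    intro x
    rw [Matrix.eval_charpoly, Polynomial.eval_prod]
    have := det_aeval A c h (Polynomial.C x - Polynomial.X ^ k)
    simp only [map_sub, map_pow, Polynomial.aeval_X, Polynomial.aeval_C, Polynomial.eval_sub,
      Polynomial.eval_C, Polynomial.eval_pow, Polynomial.eval_X] at this
    simp only [Polynomial.eval_sub, Polynomial.eval_C, Polynomial.eval_X]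
    rw [← this]
    congr 1
  rw [Matrix.trace_eq_sum_roots_charpoly, h2, Polynomial.roots_prod]
  · simp only [Polynomial.roots_X_sub_C, Multiset.bind_singleton]; rfl
  · exact Finset.prod_ne_zero_iff.mpr fun j _ => Polynomial.X_sub_C_ne_zero _

lemma charpoly_of_Lam {N : ℕ} (A : Matrix (Fin N) (Fin N) ℂ) (c : Fin N → ℂ)
    (h : ∀ s : ℂ, ((1 : Matrix (Fin N) (Fin N) ℂ) - s • A).det = ∏ j, (1 - s * c j)) :
    A.charpoly = ∏ j, (Polynomial.X - Polynomial.C (c j)) := by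
  apply mul_left_cancel₀ (Polynomial.X_ne_zero (R := ℂ))
  apply Polynomial.funext
  intro x
  rw [Polynomial.eval_mul, Polynomial.eval_mul, Polynomial.eval_X]
  by_cases hx : x = 0
  · simp [hx]
  congr 1
  rw [Matrix.eval_charpoly, Polynomial.eval_prod]
  have h1 : Matrix.scalar (Fin N) x - A = x • ((1 : Matrix (Fin N) (Fin N) ℂ) - x⁻¹ • A) := by
    rw [smul_sub, smul_smul, mul_inv_cancel₀ hx, one_smul, Matrix.smul_one_eq_diagonal]
    rfl
  rw [h1, Matrix.det_smul, h, ← Finset.card_univ, ← Finset.prod_const, ← Finset.prod_mul_distrib]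
  refine Finset.prod_congr rfl fun j _ => ?_
  simp; field_simp

/-- evaluation of Laurent polynomials at `z_j = e^{i t_j}` -/
def evA {N : ℕ} (t : Fin N → ℝ) : LA N →ₐ[ℂ] ℂ :=
  AddMonoidAlgebra.lift ℂ ℂ (Fin N → ℤ)
    { toFun := fun κ => Complex.exp (Complex.I * ∑ j, ((Multiplicative.toAdd κ) j : ℂ) * t j)
      map_one' := by simp
      map_mul' := by
        intro x y
        rw [← Complex.exp_add, ← mul_add, ← Finset.sum_add_distrib]
        congr 2
        refine Finset.sum_congr rfl fun j _ => ?_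
        simp [add_mul] }

lemma evA_single {N : ℕ} (t : Fin N → ℝ) (κ : Fin N → ℤ) (c : ℂ) :
    evA t (AddMonoidAlgebra.single κ c) = c * Complex.exp (Complex.I * ∑ j, (κ j : ℂ) * t j) := by
  simp [evA, AddMonoidAlgebra.lift_single]

lemma evA_zz {N : ℕ} (t : Fin N → ℝ) (j : Fin N) (a : ℤ) :
    evA t (zz j a) = Complex.exp (Complex.I * (a * t j)) := by
  rw [zz, evA_single, one_mul]
  congr 2
  rw [Finset.sum_eq_single j]
  · simp
  · intro k _ hk; simp [Pi.single_eq_of_ne hk]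
  · simp

lemma evA_pp {N : ℕ} (θ : Matrix.unitaryGroup (Fin N) ℂ → Fin N → ℝ)
    (hθ : ∀ (X : Matrix.unitaryGroup (Fin N) ℂ) (s : ℂ),
      Lam X s = ∏ j, (1 - s * Complex.exp (-((θ X j : ℝ) : ℂ) * Complex.I)))
    (X : Matrix.unitaryGroup (Fin N) ℂ) (a : ℤ) :
    evA (θ X) (pp N a) = ((X ^ a : Matrix.unitaryGroup (Fin N) ℂ) : Matrix (Fin N) (Fin N) ℂ).trace := by
  have hc := charpoly_of_Lam _ _ (hθ X)
  have hk := trace_pow_of_charpoly _ _ hc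
  have hneg : ∀ k : ℕ, evA (θ X) (pp N (-(k : ℤ))) =
      ((X ^ (-(k : ℤ)) : Matrix.unitaryGroup (Fin N) ℂ) : Matrix (Fin N) (Fin N) ℂ).trace := by
    intro k
    have : ((X ^ (-(k : ℤ)) : Matrix.unitaryGroup (Fin N) ℂ) : Matrix (Fin N) (Fin N) ℂ) =
        ((X : Matrix (Fin N) (Fin N) ℂ)ᴴ) ^ k := by
      rw [_root_.zpow_neg, zpow_natCast, ← inv_pow]; rfl
    rw [this, hk, pp, map_sum]
    refine Finset.sum_congr rfl fun j _ => ?_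
    rw [evA_zz, ← Complex.exp_nat_mul]
    congr 1; push_cast; ring
  obtain ⟨k, rfl | rfl⟩ := a.eq_nat_or_neg
  · have h1 := congrArg (starRingEnd ℂ) (hneg k)
    have : ((X ^ (-(k : ℤ)) : Matrix.unitaryGroup (Fin N) ℂ) : Matrix (Fin N) (Fin N) ℂ) =
        ((X ^ (k : ℤ) : Matrix.unitaryGroup (Fin N) ℂ) : Matrix (Fin N) (Fin N) ℂ)ᴴ := by
      rw [_root_.zpow_neg]; rfl
    rw [this, Matrix.trace_conjTranspose] at h1
    simp only [RCLike.star_def, Complex.conj_conj] at h1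
    rw [← h1, pp, map_sum, pp, map_sum, map_sum]
    refine Finset.sum_congr rfl fun j _ => ?_
    rw [evA_zz, evA_zz, ← Complex.exp_conj]
    congr 1; simp
  · exact hneg k

/-- shorthand for the unitary group -/
abbrev UG (N : ℕ) := Matrix.unitaryGroup (Fin N) ℂ

/-- shorthand for matrices -/
abbrev MT (N : ℕ) := Matrix (Fin N) (Fin N) ℂ

instance instSecondCountableMT (N : ℕ) : SecondCountableTopology (MT N) :=
  (inferInstance : SecondCountableTopology (Fin N → Fin N → ℂ))

instance instBorelMT (N : ℕ) : BorelSpace (MT N) :=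
  (inferInstance : BorelSpace (Fin N → Fin N → ℂ))

instance instBorelUG (N : ℕ) : BorelSpace (UG N) :=
  Subtype.borelSpace _

instance instSecondCountableUG (N : ℕ) : SecondCountableTopology (UG N) :=
  TopologicalSpace.Subtype.secondCountableTopology _

instance instCompactUG (N : ℕ) : CompactSpace (UG N) := by
  apply isCompact_iff_compactSpace.mp
  have hK : IsCompact (Set.pi Set.univ (fun _ : Fin N => Set.pi Set.univ
      (fun _ : Fin N => Metric.closedBall (0 : ℂ) 1))) :=
    isCompact_univ_pi fun _ => isCompact_univ_pi fun _ => isCompact_closedBall 0 1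
  have hK' : IsCompact {M : MT N | ∀ i j, ‖M i j‖ ≤ 1} := by
    have e : {M : Fin N → Fin N → ℂ | ∀ i j, ‖M i j‖ ≤ 1} = (Set.pi Set.univ (fun _ : Fin N =>
        Set.pi Set.univ (fun _ : Fin N => Metric.closedBall (0 : ℂ) 1))) := by
      ext M
      simp [Set.mem_pi]
    rw [← e] at hK
    exact hK
  refine hK'.of_isClosed_subset ?_ fun M hM i j => entry_norm_bound_of_unitary hM i j
  have : ((Matrix.unitaryGroup (Fin N) ℂ : Submonoid (MT N)) : Set (MT N)) =
      {M : MT N | M * star M = 1} := by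
    ext M; exact Matrix.mem_unitaryGroup_iff
  rw [this]
  exact isClosed_eq (continuous_id.mul continuous_star) continuous_const

section
attribute [local instance] Matrix.linftyOpNormedRing Matrix.linftyOpNormedAlgebra

lemma one_param {N : ℕ} (H : MT N) (hH : Hᴴ = -H) : ∃ A : ℝ → UG N,
    (∀ s t, A (s + t) = A s * A t) ∧ A 0 = 1 ∧
    ∀ i j, HasDerivAt (fun t => (A t : MT N) i j) (H i j) 0 := by
  have hu : ∀ t : ℝ, NormedSpace.exp (t • H) ∈ Matrix.unitaryGroup (Fin N) ℂ := by
    intro t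
    rw [Matrix.mem_unitaryGroup_iff, Matrix.star_eq_conjTranspose, ← Matrix.exp_conjTranspose,
      Matrix.conjTranspose_smul, hH, ← Matrix.exp_add_of_commute]
    · simp
    · exact ((Commute.refl H).neg_right.smul_left _).smul_right _
  refine ⟨fun t => ⟨NormedSpace.exp (t • H), hu t⟩, ?_, ?_, ?_⟩
  · intro s t
    ext1
    simp only [Submonoid.coe_mul]
    rw [add_smul, Matrix.exp_add_of_commute]
    exact ((Commute.refl H).smul_left _).smul_right _
  · ext1; simp
  · intro i j
    have h := hasDerivAt_exp_smul_const (𝕂 := ℝ) H 0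
    rw [zero_smul, NormedSpace.exp_zero, one_mul] at h
    have h1 := hasDerivAt_pi.mp h i
    exact hasDerivAt_pi.mp h1 j
end

/-- entrywise derivative at 0 -/
def MD {N : ℕ} (M : ℝ → MT N) (D : MT N) : Prop :=
  ∀ i j, HasDerivAt (fun t => M t i j) (D i j) 0

lemma MD_mul {N : ℕ} {M M' : ℝ → MT N} {D D' : MT N} (h : MD M D) (h' : MD M' D') :
    MD (fun t => M t * M' t) (D * M' 0 + M 0 * D') := by
  intro i j
  simp only [Matrix.mul_apply, Matrix.add_apply, ← Finset.sum_add_distrib]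
  exact HasDerivAt.fun_sum fun k _ => (h i k).mul (h' k j)

lemma MD_const {N : ℕ} (M : MT N) : MD (fun _ => M) 0 := fun _ _ => hasDerivAt_const _ _

/-- derivative of `X ^ a` in direction `H` -/
def DP {N : ℕ} (a : ℤ) (H : MT N) (X : UG N) : MT N :=
  SS a (fun m => ((X ^ m : UG N) : MT N) * H * ((X ^ (a - m) : UG N) : MT N))

lemma SS_congr {B : Type*} [AddCommGroup B] (a : ℤ) {φ ψ : ℤ → B} (h : ∀ m, φ m = ψ m) :
    SS a φ = SS a ψ := by rw [show φ = ψ from funext h]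

lemma DP_succ {N : ℕ} (a : ℤ) (H : MT N) (X : UG N) :
    DP (a + 1) H X = DP a H X * (X : MT N) + ((X ^ a : UG N) : MT N) * H * (X : MT N) := by
  have h := SS_map (AddMonoidHom.mulRight (X : MT N)) a
    (fun m => ((X ^ m : UG N) : MT N) * H * ((X ^ (a - m) : UG N) : MT N))
  simp only [AddMonoidHom.mulRight_apply] at h
  rw [DP, SS_succ, DP, h, add_sub_cancel_left, zpow_one]
  congr 1
  refine SS_congr _ fun m => ?_
  rw [mul_assoc _ _ (X : MT N), ← Submonoid.coe_mul, ← _root_.zpow_add_one]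
  congr 4; ring

lemma MD_zpow {N : ℕ} {A : ℝ → UG N} {H : MT N} (hA : ∀ s t, A (s + t) = A s * A t)
    (h0 : A 0 = 1) (hd : MD (fun t => (A t : MT N)) H) (X : UG N) (a : ℤ) :
    MD (fun t => (((A t * X) ^ a : UG N) : MT N)) (DP a H X) := by
  have hX : MD (fun t => ((A t * X : UG N) : MT N)) (H * X) := by
    have := MD_mul hd (MD_const (X : MT N))
    simpa using this
  have hinv : MD (fun t => (((A t * X)⁻¹ : UG N) : MT N)) (-((X⁻¹ : UG N) : MT N) * H) := by
    have hn : MD (fun t => ((A (-t) : UG N) : MT N)) (-H) := by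
      intro i j
      have h1 : HasDerivAt (fun t => (A t : MT N) i j) (H i j) (-0) := by
        rw [neg_zero]; exact hd i j
      have := h1.scomp (0 : ℝ) (hasDerivAt_neg (0 : ℝ))
      simpa [Function.comp_def] using this
    have := MD_mul (MD_const ((X⁻¹ : UG N) : MT N)) hn
    have e : ∀ t, (A t * X)⁻¹ = X⁻¹ * A (-t) := by
      intro t
      rw [_root_.mul_inv_rev]
      congr 1
      rw [inv_eq_iff_mul_eq_one, ← hA, add_neg_cancel, h0]
    simp only [e, Submonoid.coe_mul]
    simpa using this
  induction a using Int.induction_on with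
  | zero =>
    have : DP 0 H X = 0 := SS_zero _
    rw [this]
    simpa using MD_const (1 : MT N)
  | succ n ih =>
    have := MD_mul ih hX
    simp only [h0, one_mul, ← Submonoid.coe_mul, ← _root_.zpow_add_one] at this
    rw [DP_succ, mul_assoc _ H]
    exact this
  | pred n ih =>
    have := MD_mul ih hinv
    simp only [h0, one_mul, ← Submonoid.coe_mul, ← _root_.zpow_sub_one] at this
    have e : DP (-(n:ℤ)) H X = DP (-(n:ℤ) - 1) H X * (X : MT N) +
        ((X ^ (-(n:ℤ) - 1) : UG N) : MT N) * H * (X : MT N) := by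
      rw [← DP_succ]; congr 1; ring
    have hXX : (X : MT N) * ((X⁻¹ : UG N) : MT N) = 1 := by
      rw [← Submonoid.coe_mul]; simp
    rw [e, add_mul, mul_assoc, hXX, mul_assoc _ (X : MT N), hXX, mul_one, mul_one] at this
    convert this using 1
    rw [_root_.zpow_sub_one, Submonoid.coe_mul]
    noncomm_ring

lemma trace_DP {N : ℕ} (a : ℤ) (H : MT N) (X : UG N) :
    (DP a H X).trace = a * (H * ((X ^ a : UG N) : MT N)).trace := by
  have h := SS_map (Matrix.traceAddMonoidHom (Fin N) ℂ) a
    (fun m => ((X ^ m : UG N) : MT N) * H * ((X ^ (a - m) : UG N) : MT N))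
  simp only [Matrix.traceAddMonoidHom_apply] at h
  rw [DP, h, SS_congr a (ψ := fun _ => (H * ((X ^ a : UG N) : MT N)).trace), SS_const]
  · simp
  · intro m
    rw [mul_assoc, Matrix.trace_mul_comm, mul_assoc, ← Submonoid.coe_mul, ← _root_.zpow_add]
    congr 4; ring

lemma cont_integrable {N : ℕ} (μ : Measure (UG N)) [IsProbabilityMeasure μ] {F : UG N → ℂ}
    (hF : Continuous F) : Integrable F μ := by
  obtain ⟨C, hC⟩ := (isCompact_univ (X := UG N)).exists_bound_of_continuousOn hF.continuousOn
  exact Integrable.of_bound hF.aestronglyMeasurable C (Filter.Eventually.of_forall fun X => hC X trivial)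

lemma haar_ibp {N : ℕ} (μ : Measure (UG N)) [IsProbabilityMeasure μ]
    (hHaar : ∀ A : UG N, MeasurePreserving (fun X => A * X) μ μ)
    {A : ℝ → UG N} (hA : ∀ s t, A (s + t) = A s * A t)
    {F R : UG N → ℂ} (hF : Continuous F) (hR : Continuous R)
    (hd : ∀ X, HasDerivAt (fun t => F (A t * X)) (R X) 0) : ∫ X, R X ∂μ = 0 := by
  obtain ⟨C, hC⟩ := (isCompact_univ (X := UG N)).exists_bound_of_continuousOn hR.continuousOn
  have h0 : A 0 = 1 := by
    have := hA 0 0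
    rw [add_zero] at this
    exact left_eq_mul.mp this
  have hd' : ∀ X t, HasDerivAt (fun t => F (A t * X)) (R (A t * X)) t := by
    intro X t
    have h1 := hd (A t * X)
    have h2 : HasDerivAt (fun s => F (A s * (A t * X))) (R (A t * X)) (t - t) := by
      rw [sub_self]; exact h1
    have h3 := h2.comp_sub_const t t
    refine h3.congr_of_eventuallyEq (Filter.Eventually.of_forall fun s => ?_)
    simp only
    rw [← mul_assoc, ← hA, sub_add_cancel]
  have hcm : ∀ t, Continuous fun X => A t * X := fun t => continuous_const.mul continuous_id
  have key := (_root_.hasDerivAt_integral_of_dominated_loc_of_deriv_le (μ := μ) (𝕜 := ℝ)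
    (F := fun t X => F (A t * X)) (F' := fun t X => R (A t * X)) (x₀ := 0) (s := Set.univ)
    (bound := fun _ => C) Filter.univ_mem
    (Filter.Eventually.of_forall fun t => (hF.comp (hcm t)).aestronglyMeasurable)
    (cont_integrable μ (hF.comp (hcm 0)))
    (hR.comp (hcm 0)).aestronglyMeasurable
    (Filter.Eventually.of_forall fun X t _ => hC _ trivial)
    (integrable_const C)
    (Filter.Eventually.of_forall fun X t _ => hd' X t)).2
  have hconst : ∀ t, ∫ X, F (A t * X) ∂μ = ∫ X, F X ∂μ := by
    intro t
    have hm := hHaar (A t)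
    conv_rhs => rw [← hm.map_eq]
    rw [MeasureTheory.integral_map hm.measurable.aemeasurable]
    exact hF.aestronglyMeasurable
  simp only [hconst] at key
  have := key.unique (hasDerivAt_const (0 : ℝ) (∫ X, F X ∂μ))
  simpa [h0] using this

lemma cont_zpow {N : ℕ} (a : ℤ) (i j : Fin N) :
    Continuous fun X : UG N => ((X ^ a : UG N) : MT N) i j := by
  have : Continuous fun X : UG N => ((X ^ a : UG N) : MT N) :=
    continuous_subtype_val.comp (continuous_zpow a)
  exact this.matrix_elem i j

lemma cont_trace {N : ℕ} (H : MT N) (a : ℤ) :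
    Continuous fun X : UG N => (H * ((X ^ a : UG N) : MT N)).trace := by
  simp only [Matrix.trace, Matrix.diag, Matrix.mul_apply]
  exact continuous_finsetSum _ fun i _ => continuous_finsetSum _ fun j _ =>
    continuous_const.mul (cont_zpow _ _ _)

lemma cont_DP {N : ℕ} (a : ℤ) (H : MT N) (i j : Fin N) :
    Continuous fun X : UG N => DP a H X i j := by
  have h1 : ∀ m, Continuous fun X : UG N => ((X ^ m : UG N) : MT N) * H * ((X ^ (a - m) : UG N) : MT N) :=
    fun m => ((continuous_subtype_val.comp (continuous_zpow m)).mul continuous_const).mul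
      (continuous_subtype_val.comp (continuous_zpow (a - m)))
  have : Continuous fun X : UG N => DP a H X := by
    unfold DP SS
    exact (continuous_finsetSum _ fun m _ => h1 m).sub (continuous_finsetSum _ fun m _ => h1 m)
  exact this.matrix_elem i j

section
variable {N : ℕ} (θ : UG N → Fin N → ℝ)
    (hθ : ∀ (X : UG N) (s : ℂ),
      Lam X s = ∏ j, (1 - s * Complex.exp (-((θ X j : ℝ) : ℂ) * Complex.I)))

/-- derivative of a class function from derivative data -/
def RD (H : MT N) (l : List (ℤ × LA N)) (X : UG N) : ℂ :=
  (l.map (fun p => (H * ((X ^ p.1 : UG N) : MT N)).trace * evA (θ X) p.2)).sum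

lemma evA_cont (hθ : ∀ (X : UG N) (s : ℂ),
      Lam X s = ∏ j, (1 - s * Complex.exp (-((θ X j : ℝ) : ℂ) * Complex.I)))
    {g : LA N} (hg : g ∈ GG N) : Continuous fun X => evA (θ X) g := by
  induction hg using Algebra.adjoin_induction with
  | mem x hx =>
    obtain ⟨a, rfl⟩ := hx
    simp only [evA_pp θ hθ]
    simpa using cont_trace 1 a
  | algebraMap r => simp only [AlgHom.commutes]; exact continuous_const
  | add x y _ _ hx hy => simp only [map_add]; exact hx.add hy
  | mul x y _ _ hx hy => simp only [map_mul]; exact hx.mul hy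

lemma RD_cont (hθ : ∀ (X : UG N) (s : ℂ),
      Lam X s = ∏ j, (1 - s * Complex.exp (-((θ X j : ℝ) : ℂ) * Complex.I)))
    (H : MT N) (l : List (ℤ × LA N)) (hl : ∀ p ∈ l, p.2 ∈ GG N) : Continuous (RD θ H l) := by
  have : RD θ H l = (l.map (fun p => fun X : UG N =>
      (H * ((X ^ p.1 : UG N) : MT N)).trace * evA (θ X) p.2)).sum := by
    clear hl
    ext X
    induction l with
    | nil => simp [RD]
    | cons p l ih => simp only [RD, List.map_cons, List.sum_cons, Pi.add_apply] at ih ⊢; rw [ih]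
  rw [this]
  clear this
  induction l with
  | nil => exact continuous_const
  | cons p l ih =>
    rw [List.map_cons, List.sum_cons]
    exact ((cont_trace H p.1).mul (evA_cont θ hθ (hl p (by simp)))).add
      (ih fun q hq => hl q (by simp [hq]))

lemma RD_append (H : MT N) (l l' : List (ℤ × LA N)) (X : UG N) :
    RD θ H (l ++ l') X = RD θ H l X + RD θ H l' X := by simp [RD]

lemma RD_mulr (H : MT N) (l : List (ℤ × LA N)) (h : LA N) (X : UG N) :
    RD θ H (l.map (fun p => (p.1, p.2 * h))) X = RD θ H l X * evA (θ X) h := by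
  induction l with
  | nil => simp [RD]
  | cons p l ih =>
    simp only [RD, List.map_cons, List.sum_cons, map_mul] at ih ⊢
    rw [ih]; ring

lemma RD_mull (H : MT N) (l : List (ℤ × LA N)) (h : LA N) (X : UG N) :
    RD θ H (l.map (fun p => (p.1, h * p.2))) X = evA (θ X) h * RD θ H l X := by
  induction l with
  | nil => simp [RD]
  | cons p l ih =>
    simp only [RD, List.map_cons, List.sum_cons, map_mul] at ih ⊢
    rw [ih]; ring

lemma RD_lin (c : ℂ) (H H' : MT N) (l : List (ℤ × LA N)) (X : UG N) :
    RD θ (H + c • H') l X = RD θ H l X + c * RD θ H' l X := by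
  induction l with
  | nil => simp [RD]
  | cons p l ih =>
    simp only [RD, List.map_cons, List.sum_cons, add_mul, Matrix.trace_add, smul_mul_assoc,
      Matrix.trace_smul, smul_eq_mul] at ih ⊢
    rw [ih]; ring

lemma DP_lin (a : ℤ) (c : ℂ) (H H' : MT N) (X : UG N) :
    DP a (H + c • H') X = DP a H X + c • DP a H' X := by
  have h := SS_map (DistribSMul.toAddMonoidHom (MT N) c) a
    (fun m => ((X ^ m : UG N) : MT N) * H' * ((X ^ (a - m) : UG N) : MT N))
  simp only [DistribSMul.toAddMonoidHom_apply] at h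
  rw [DP, DP, DP, h, SS_add]
  refine SS_congr _ fun m => ?_
  simp [mul_add, add_mul]

lemma RD_deriv (hθ : ∀ (X : UG N) (s : ℂ),
      Lam X s = ∏ j, (1 - s * Complex.exp (-((θ X j : ℝ) : ℂ) * Complex.I)))
    {A : ℝ → UG N} {H : MT N} (hA : ∀ s t, A (s + t) = A s * A t)
    (h0 : A 0 = 1) (hd : MD (fun t => (A t : MT N)) H) (X : UG N)
    {g : LA N} {l : List (ℤ × LA N)} (hg : GD g l) :
    HasDerivAt (fun t => evA (θ (A t * X)) g) (RD θ H l X) 0 := by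
  induction hg with
  | cst r => simp only [AlgHom.commutes]; exact hasDerivAt_const _ _
  | pw b =>
    simp only [evA_pp θ hθ]
    have h1 := MD_zpow hA h0 hd X b
    have h2 : RD θ H [(b, algebraMap ℂ (LA N) b)] X = (DP b H X).trace := by
      simp [RD, trace_DP, mul_comm]
    rw [h2]
    simp only [Matrix.trace, Matrix.diag]
    exact HasDerivAt.fun_sum fun i _ => h1 i i
  | add h1 h2 ih1 ih2 =>
    simp only [map_add, RD_append]
    exact ih1.add ih2
  | mul h1 h2 ih1 ih2 =>
    simp only [map_mul, RD_append, RD_mulr, RD_mull]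
    have := HasDerivAt.fun_mul ih1 ih2
    simpa only [h0, one_mul] using! this

/-- the integrand of the loop equation -/
def RL (a : ℤ) (g : LA N) (l : List (ℤ × LA N)) (H : MT N) (i j : Fin N) (X : UG N) : ℂ :=
  DP a H X i j * evA (θ X) g + ((X ^ a : UG N) : MT N) i j * RD θ H l X

lemma RL_cont (hθ : ∀ (X : UG N) (s : ℂ),
      Lam X s = ∏ j, (1 - s * Complex.exp (-((θ X j : ℝ) : ℂ) * Complex.I)))
    (a : ℤ) {g : LA N} {l : List (ℤ × LA N)} (hg : GD g l) (H : MT N) (i j : Fin N) :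
    Continuous (RL θ a g l H i j) :=
  ((cont_DP a H i j).mul (evA_cont θ hθ (GD_mem hg).1)).add
    ((cont_zpow a i j).mul (RD_cont θ hθ H l (GD_mem hg).2))

lemma RL_skew (hθ : ∀ (X : UG N) (s : ℂ),
      Lam X s = ∏ j, (1 - s * Complex.exp (-((θ X j : ℝ) : ℂ) * Complex.I)))
    (μ : Measure (UG N)) [IsProbabilityMeasure μ]
    (hHaar : ∀ A : UG N, MeasurePreserving (fun X => A * X) μ μ)
    (a : ℤ) {g : LA N} {l : List (ℤ × LA N)} (hg : GD g l) (H : MT N) (hH : Hᴴ = -H)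
    (i j : Fin N) : ∫ X, RL θ a g l H i j X ∂μ = 0 := by
  obtain ⟨A, hA, h0, hd⟩ := one_param H hH
  refine haar_ibp μ hHaar hA (F := fun X => ((X ^ a : UG N) : MT N) i j * evA (θ X) g)
    ((cont_zpow a i j).mul (evA_cont θ hθ (GD_mem hg).1)) (RL_cont θ hθ a hg H i j) fun X => ?_
  have := HasDerivAt.fun_mul (MD_zpow hA h0 hd X a i j) (RD_deriv θ hθ hA h0 hd X hg)
  simpa only [h0, one_mul] using! this

lemma RL_all (hθ : ∀ (X : UG N) (s : ℂ),
      Lam X s = ∏ j, (1 - s * Complex.exp (-((θ X j : ℝ) : ℂ) * Complex.I)))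
    (μ : Measure (UG N)) [IsProbabilityMeasure μ]
    (hHaar : ∀ A : UG N, MeasurePreserving (fun X => A * X) μ μ)
    (a : ℤ) {g : LA N} {l : List (ℤ × LA N)} (hg : GD g l) (H : MT N)
    (i j : Fin N) : ∫ X, RL θ a g l H i j X ∂μ = 0 := by
  set S1 : MT N := (2⁻¹ : ℂ) • (H - Hᴴ) with hS1
  set S2 : MT N := (-(2⁻¹ : ℂ) * Complex.I) • (H + Hᴴ) with hS2
  have e : H = S1 + Complex.I • S2 := by
    rw [hS1, hS2, smul_smul]
    have : Complex.I * (-(2⁻¹ : ℂ) * Complex.I) = 2⁻¹ := by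
      linear_combination (-(2⁻¹ : ℂ)) * Complex.I_mul_I
    rw [this, ← smul_add]
    rw [sub_add_add_cancel, ← two_smul ℂ H, smul_smul]
    norm_num
  have h1 : S1ᴴ = -S1 := by
    rw [hS1, Matrix.conjTranspose_smul, Matrix.conjTranspose_sub, Matrix.conjTranspose_conjTranspose,
      ← smul_neg, neg_sub]
    simp
  have h2 : S2ᴴ = -S2 := by
    rw [hS2, Matrix.conjTranspose_smul, Matrix.conjTranspose_add, Matrix.conjTranspose_conjTranspose,
      ← neg_smul, add_comm H]
    simp
  have e2 : ∀ X, RL θ a g l H i j X = RL θ a g l S1 i j X + Complex.I * RL θ a g l S2 i j X := by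
    intro X
    conv_lhs => rw [e]
    simp only [RL, DP_lin, RD_lin, Matrix.add_apply, Matrix.smul_apply, smul_eq_mul]
    ring
  simp only [e2]
  rw [integral_add (cont_integrable μ (RL_cont θ hθ a hg S1 i j))
    ((cont_integrable μ (RL_cont θ hθ a hg S2 i j)).const_mul _), MeasureTheory.integral_const_mul,
    RL_skew θ hθ μ hHaar a hg S1 h1, RL_skew θ hθ μ hHaar a hg S2 h2]
  simp

lemma RL_sum (hθ : ∀ (X : UG N) (s : ℂ),
      Lam X s = ∏ j, (1 - s * Complex.exp (-((θ X j : ℝ) : ℂ) * Complex.I)))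
    (a : ℤ) {g : LA N} {l : List (ℤ × LA N)} (hg : GD g l) (X : UG N) :
    ∑ i, ∑ j, RL θ a g l (Matrix.single i j 1) i j X = evA (θ X) (loopE a g) := by
  have h1 : ∑ i, ∑ j, DP a (Matrix.single i j 1) X i j = evA (θ X) (dv N a) := by
    have e1 : ∀ i j, DP a (Matrix.single i j 1) X i j =
        SS a (fun m => ((X ^ m : UG N) : MT N) i i * ((X ^ (a - m) : UG N) : MT N) j j) := by
      intro i j
      have h := SS_map (Matrix.entryAddMonoidHom ℂ i j) a
        (fun m => ((X ^ m : UG N) : MT N) * (Matrix.single i j 1) * ((X ^ (a - m) : UG N) : MT N))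
      simp only [Matrix.entryAddMonoidHom_apply] at h
      rw [DP, h]
      refine SS_congr _ fun m => ?_
      simp [Matrix.mul_apply, Matrix.single_apply, ite_and]
    have h := SS_map ((evA (θ X)).toLinearMap.toAddMonoidHom) a (fun m => pp N m * pp N (a - m))
    have h' : evA (θ X) (dv N a) = SS a (fun m => evA (θ X) (pp N m * pp N (a - m))) := h
    rw [h']
    simp only [e1, SS_sum]
    refine SS_congr _ fun m => ?_
    rw [map_mul, evA_pp θ hθ, evA_pp θ hθ, Matrix.trace, Matrix.trace, Finset.sum_mul_sum]
    rfl
  have h2 : ∑ i, ∑ j, ((X ^ a : UG N) : MT N) i j * RD θ (Matrix.single i j 1) l X =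
      evA (θ X) (XX a g) := by
    rw [XX_GD hg, map_list_sum, List.map_map]
    clear hg
    induction l with
    | nil => simp [RD]
    | cons p l ih =>
      simp only [RD, List.map_cons, List.sum_cons, mul_add, Finset.sum_add_distrib] at ih ⊢
      rw [ih]
      congr 1
      simp only [Function.comp_apply, map_mul, evA_pp θ hθ, ← mul_assoc, ← Finset.sum_mul]
      congr 1
      rw [_root_.zpow_add, Submonoid.coe_mul, Matrix.trace]
      refine Finset.sum_congr rfl fun i _ => ?_
      rw [Matrix.diag, Matrix.mul_apply]
      refine Finset.sum_congr rfl fun j _ => ?_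
      congr 1
      simp [Matrix.trace, Matrix.mul_apply, Matrix.single_apply, ite_and]
  simp only [RL, Finset.sum_add_distrib, ← Finset.sum_mul]
  rw [h1, h2, loopE, map_add, map_mul]

/-- Expectations of symmetric Laurent polynomials under Haar measure. -/
theorem haar_coeff (hθ : ∀ (X : UG N) (s : ℂ),
      Lam X s = ∏ j, (1 - s * Complex.exp (-((θ X j : ℝ) : ℂ) * Complex.I)))
    (μ : Measure (UG N)) [IsProbabilityMeasure μ]
    (hHaar : ∀ A : UG N, MeasurePreserving (fun X => A * X) μ μ)
    (g : LA N) (hg : g ∈ GG N) : ∫ X, evA (θ X) g ∂μ = (VV N * g).coeff (rh N) := by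
  let Φ : GG N →ₗ[ℂ] ℂ :=
    { toFun := fun g => ∫ X, evA (θ X) (g : LA N) ∂μ
      map_add' := by
        intro g h
        simp only [Subalgebra.coe_add, map_add]
        exact integral_add (cont_integrable μ (evA_cont θ hθ g.2))
          (cont_integrable μ (evA_cont θ hθ h.2))
      map_smul' := by
        intro c g
        simp only [Subalgebra.coe_smul, map_smul, smul_eq_mul, RingHom.id_apply]
        exact MeasureTheory.integral_const_mul _ _ }
  refine weyl Φ ?_ ?_ g hg
  · change ∫ X, evA (θ X) (1 : LA N) ∂μ = 1
    simp
  · intro a g hg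
    change ∫ X, evA (θ X) (loopE a g) ∂μ = 0
    obtain ⟨l, hl⟩ := GD_exists hg
    simp only [← RL_sum θ hθ a hl]
    rw [integral_finsetSum _ fun i _ => integrable_finsetSum _ fun j _ =>
      cont_integrable μ (RL_cont θ hθ a hl _ i j)]
    refine Finset.sum_eq_zero fun i _ => ?_
    rw [integral_finsetSum _ fun j _ => cont_integrable μ (RL_cont θ hθ a hl _ i j)]
    exact Finset.sum_eq_zero fun j _ => RL_all θ hθ μ hHaar a hl _ i j

end

lemma coeff_VV_single {N : ℕ} (κ : Fin N → ℤ) :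
    (VV N * AddMonoidAlgebra.single κ 1).coeff (rh N) =
      Matrix.det (Matrix.of fun x y : Fin N => if (y : ℤ) + κ x = x then (1 : ℂ) else 0) := by
  rw [← Matrix.det_transpose, Matrix.det_apply', VV_eq, Finset.sum_mul, AddMonoidAlgebra.coeff_sum,
    Finsupp.finsetSum_apply]
  refine Finset.sum_congr rfl fun σ _ => ?_
  rw [smul_mul_assoc, AddMonoidAlgebra.single_mul_single, one_mul]
  simp only [AddMonoidAlgebra.coeff_smul, Finsupp.smul_apply, AddMonoidAlgebra.coeff_single,
    Finsupp.single_apply, Matrix.transpose_apply, Matrix.of_apply]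
  rw [zsmul_eq_mul]
  congr 1
  by_cases h : ((fun j => ((σ j : Fin N) : ℤ)) + κ) = rh N
  · rw [if_pos h]
    symm
    apply Finset.prod_eq_one
    intro x _
    have := congrFun h x
    rw [if_pos]
    simpa [rh] using this
  · rw [if_neg h]
    symm
    have : ∃ x, ¬ (((σ x : Fin N) : ℤ) + κ x = x) := by
      by_contra hc
      push Not at hc
      exact h (funext fun x => by simpa [rh] using hc x)
    obtain ⟨x, hx⟩ := this
    exact Finset.prod_eq_zero (Finset.mem_univ x) (by rw [if_neg hx])

/-- the 3x3 indicator determinant -/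
def BB {N : ℕ} (k : Fin 3 → Fin N) (a : Fin 3 → ℤ) : ℂ :=
  Matrix.det (Matrix.of fun i l : Fin 3 => if (k l : ℤ) + a i = k i then (1 : ℂ) else 0)

lemma BB_not_inj {N : ℕ} (k : Fin 3 → Fin N) (a : Fin 3 → ℤ) (h : ¬ Function.Injective k) :
    BB k a = 0 := by
  rw [Function.Injective] at h
  push Not at h
  obtain ⟨i, j, hij, hne⟩ := h
  exact Matrix.det_zero_of_column_eq hne (fun x => by simp [hij])

lemma coeff_BB {N : ℕ} (k : Fin 3 → Fin N) (a : Fin 3 → ℤ) (h : Function.Injective k) :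
    (VV N * (∏ i, zz (k i) (a i))).coeff (rh N) = BB k a := by
  set κ : Fin N → ℤ := ∑ i, Pi.single (k i) (a i) with hκ
  have e : ∏ i, zz (k i) (a i) = (AddMonoidAlgebra.single κ 1 : LA N) := by
    rw [hκ, Fin.prod_univ_three, Fin.sum_univ_three]
    simp [zz, AddMonoidAlgebra.single_mul_single]
  have h1 : ∀ i, κ (k i) = a i := by
    intro i
    rw [hκ, Finset.sum_apply, Finset.sum_eq_single i]
    · simp
    · intro j _ hj; rw [Pi.single_eq_of_ne]; exact fun hh => hj (h hh).symm
    · simp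
  have h2 : ∀ x, x ∉ Set.range k → κ x = 0 := by
    intro x hx
    rw [hκ, Finset.sum_apply]
    refine Finset.sum_eq_zero fun i _ => ?_
    rw [Pi.single_eq_of_ne]
    exact fun hh => hx ⟨i, hh.symm⟩
  rw [e, coeff_VV_single, Matrix.twoBlockTriangular_det _ (fun x => x ∈ Set.range k)]
  · have e2 : (Matrix.of fun x y : Fin N => if (y : ℤ) + κ x = x then (1 : ℂ) else 0).toSquareBlockProp
        (fun x => ¬ x ∈ Set.range k) = 1 := by
      ext x y
      simp only [Matrix.toSquareBlockProp_def, Matrix.of_apply, h2 _ x.2, Matrix.one_apply, add_zero]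
      congr 1
      simp only [eq_iff_iff, Subtype.ext_iff, Fin.ext_iff]
      omega
    rw [e2, Matrix.det_one, mul_one, BB]
    have e3 := Matrix.det_submatrix_equiv_self (Equiv.ofInjective k h)
      ((Matrix.of fun x y : Fin N => if (y : ℤ) + κ x = x then (1 : ℂ) else 0).toSquareBlockProp
        (fun x => x ∈ Set.range k))
    refine Eq.trans (Eq.trans ?_ e3.symm) ?_
    · congr!
    · congr 1
      ext i l
      simp [Matrix.toSquareBlockProp_def, h1]
  · intro i hi j hj
    simp only [Matrix.of_apply, h2 i hi]
    rw [if_neg]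
    intro hc
    apply hi
    have : j = i := by ext; omega
    exact this ▸ hj

/-- the distinct-index sum -/
def fa (N : ℕ) (a b c : ℤ) : LA N := ∑ j1 : Fin N, ∑ j2 : Fin N, ∑ j3 : Fin N,
  if j1 ≠ j2 ∧ j1 ≠ j3 ∧ j2 ≠ j3 then zz j1 a * zz j2 b * zz j3 c else 0

lemma dist3 {R : Type*} {N : ℕ} [CommRing R] (x y w : Fin N → R) :
    (∑ j1, ∑ j2, ∑ j3, if j1 ≠ j2 ∧ j1 ≠ j3 ∧ j2 ≠ j3 then x j1 * y j2 * w j3 else 0) =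
    (∑ j, x j) * (∑ j, y j) * (∑ j, w j) - (∑ j, x j * y j) * (∑ j, w j)
      - (∑ j, x j * w j) * (∑ j, y j) - (∑ j, x j) * (∑ j, y j * w j)
      + 2 * ∑ j, x j * y j * w j := by
  have h1 : ∀ j1 j2 j3 : Fin N,
      (if j1 ≠ j2 ∧ j1 ≠ j3 ∧ j2 ≠ j3 then x j1 * y j2 * w j3 else 0) =
      x j1 * y j2 * w j3 - (if j1 = j2 then x j1 * y j2 * w j3 else 0)
        - (if j1 = j3 then x j1 * y j2 * w j3 else 0)
        - (if j2 = j3 then x j1 * y j2 * w j3 else 0)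
        + (if j1 = j2 then (if j1 = j3 then 2 * (x j1 * y j2 * w j3) else 0) else 0) := by
    intro j1 j2 j3
    by_cases h12 : j1 = j2 <;> by_cases h13 : j1 = j3 <;> by_cases h23 : j2 = j3
    · subst h12; subst h13; simp; ring
    · exact absurd (h12.symm.trans h13) h23
    · exact absurd (h12.trans h23) h13
    · subst h12; simp [h13]
    · exact absurd (h13.trans h23.symm) h12
    · subst h13; simp [h12, h23]
    · subst h23; simp [h12]
    · simp [h12, h13, h23]
  have e1 : ∑ j1, ∑ j2, ∑ j3, x j1 * y j2 * w j3 = (∑ j, x j) * (∑ j, y j) * (∑ j, w j) := by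
    simp only [← Finset.mul_sum, ← Finset.sum_mul]
  have e2 : ∑ j1, ∑ j2, ∑ j3, (if j1 = j2 then x j1 * y j2 * w j3 else 0) =
      (∑ j, x j * y j) * (∑ j, w j) := by
    rw [Finset.sum_mul]
    refine Finset.sum_congr rfl fun j1 _ => ?_
    rw [Finset.sum_eq_single j1]
    · simp [Finset.mul_sum]
    · intro b _ hb; simp [Ne.symm hb]
    · simp
  have e3 : ∑ j1, ∑ j2, ∑ j3, (if j1 = j3 then x j1 * y j2 * w j3 else 0) =
      (∑ j, x j * w j) * (∑ j, y j) := by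
    simp only [Finset.sum_ite_eq, Finset.mem_univ, if_true]
    rw [Finset.sum_mul]
    refine Finset.sum_congr rfl fun j1 _ => ?_
    rw [Finset.mul_sum]
    refine Finset.sum_congr rfl fun j2 _ => by ring
  have e4 : ∑ j1, ∑ j2, ∑ j3, (if j2 = j3 then x j1 * y j2 * w j3 else 0) =
      (∑ j, x j) * (∑ j, y j * w j) := by
    simp only [Finset.sum_ite_eq, Finset.mem_univ, if_true]
    rw [Finset.sum_mul]
    refine Finset.sum_congr rfl fun j1 _ => ?_
    rw [Finset.mul_sum]
    refine Finset.sum_congr rfl fun j2 _ => by ring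
  have e5 : ∑ j1, ∑ j2, ∑ j3,
      (if j1 = j2 then (if j1 = j3 then 2 * (x j1 * y j2 * w j3) else 0) else 0) =
      2 * ∑ j, x j * y j * w j := by
    rw [Finset.mul_sum]
    refine Finset.sum_congr rfl fun j1 _ => ?_
    rw [Finset.sum_eq_single j1]
    · simp
    · intro b _ hb; simp [Ne.symm hb]
    · simp
  simp only [h1, Finset.sum_add_distrib, Finset.sum_sub_distrib]
  rw [e1, e2, e3, e4, e5]

lemma fa_mem (N : ℕ) (a b c : ℤ) : fa N a b c ∈ GG N := by
  have e : fa N a b c = pp N a * pp N b * pp N c - pp N (a + b) * pp N c - pp N (a + c) * pp N b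
      - pp N a * pp N (b + c) + 2 * pp N (a + b + c) := by
    have := dist3 (fun j : Fin N => zz j a) (fun j => zz j b) (fun j => zz j c)
    simp only [zz_mul] at this
    exact this
  rw [e]
  have := fun a => pp_mem (N := N) a
  refine add_mem (sub_mem (sub_mem (sub_mem (mul_mem (mul_mem (this _) (this _)) (this _)) ?_) ?_) ?_) ?_
  · exact mul_mem (this _) (this _)
  · exact mul_mem (this _) (this _)
  · exact mul_mem (this _) (this _)
  · exact mul_mem (by exact ofNat_mem _ 2) (this _)

lemma inj3 {N : ℕ} (j1 j2 j3 : Fin N) :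
    Function.Injective ![j1, j2, j3] ↔ (j1 ≠ j2 ∧ j1 ≠ j3 ∧ j2 ≠ j3) := by
  constructor
  · intro h
    refine ⟨fun e => ?_, fun e => ?_, fun e => ?_⟩
    · exact absurd (@h 0 1 (by simpa using e)) (by decide)
    · exact absurd (@h 0 2 (by simpa using e)) (by decide)
    · exact absurd (@h 1 2 (by simpa using e)) (by decide)
  · rintro ⟨h1, h2, h3⟩ x y hxy
    fin_cases x <;> fin_cases y <;> simp_all [eq_comm]

lemma coeff_fa (N : ℕ) (a b c : ℤ) : (VV N * fa N a b c).coeff (rh N) =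
    ∑ j1 : Fin N, ∑ j2 : Fin N, ∑ j3 : Fin N, BB ![j1, j2, j3] ![a, b, c] := by
  simp only [fa, Finset.mul_sum, AddMonoidAlgebra.coeff_sum, Finsupp.finsetSum_apply]
  refine Finset.sum_congr rfl fun j1 _ => Finset.sum_congr rfl fun j2 _ =>
    Finset.sum_congr rfl fun j3 _ => ?_
  by_cases h : Function.Injective ![j1, j2, j3]
  · rw [if_pos ((inj3 _ _ _).mp h), ← coeff_BB _ _ h, Fin.prod_univ_three]
    rfl
  · rw [if_neg (fun hh => h ((inj3 _ _ _).mpr hh)), BB_not_inj _ _ h]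
    simp

lemma zl_eq {u : ℂ} (h : Complex.exp u ≠ 1) : zl u = (1 - Complex.exp u)⁻¹ := by
  have hn : (1 : ℂ) - Complex.exp (-u) ≠ 0 := by
    intro hc
    apply h
    have : Complex.exp (-u) = 1 := (sub_eq_zero.mp hc).symm
    rw [Complex.exp_neg] at this
    exact inv_eq_one.mp this
  have hd : HasDerivAt zf (-(Complex.exp (-u)) / (1 - Complex.exp (-u)) ^ 2) u := by
    have h1 : HasDerivAt (fun x : ℂ => 1 - Complex.exp (-x)) (Complex.exp (-u)) u := by
      have := ((hasDerivAt_neg u).cexp).const_sub 1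
      simpa using this
    exact h1.fun_inv hn
  rw [zl, hd.deriv, zf]
  have hn2 : (1 : ℂ) - Complex.exp u ≠ 0 := fun hc => h (sub_eq_zero.mp hc).symm
  rw [Complex.exp_neg] at hn ⊢
  have := Complex.exp_ne_zero u
  field_simp
  ring

lemma deriv_zl_eq {u : ℂ} (h : Complex.exp u ≠ 1) :
    deriv zl u = Complex.exp u / (1 - Complex.exp u) ^ 2 := by
  have hn2 : (1 : ℂ) - Complex.exp u ≠ 0 := fun hc => h (sub_eq_zero.mp hc).symm
  have h1 : HasDerivAt (fun x : ℂ => (1 - Complex.exp x)⁻¹)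
      (Complex.exp u / (1 - Complex.exp u) ^ 2) u := by
    have := ((Complex.hasDerivAt_exp u).const_sub 1).fun_inv hn2
    simpa using this
  have h2 : zl =ᶠ[nhds u] fun x : ℂ => (1 - Complex.exp x)⁻¹ := by
    have : ∀ᶠ x in nhds u, Complex.exp x ≠ 1 :=
      Complex.continuous_exp.continuousAt.eventually_ne h
    filter_upwards [this] with x hx using zl_eq hx
  exact (h1.congr_of_eventuallyEq h2).deriv

lemma Jb_rat (N : ℕ) {α β p r : ℂ} (hp : Complex.exp α = p) (hr : Complex.exp (-β) = r)
    (hpr : p ≠ r) : Jb N α β = p * r / (p - r) ^ 2 * (1 - r ^ N / p ^ N) := by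
  have p0 : p ≠ 0 := hp ▸ Complex.exp_ne_zero _
  have r0 : r ≠ 0 := hr ▸ Complex.exp_ne_zero _
  have e1 : Complex.exp (α + β) = p / r := by
    rw [Complex.exp_add, hp, ← hr, Complex.exp_neg]; simp
  have hne : Complex.exp (α + β) ≠ 1 := by
    rw [e1]; intro h; exact hpr ((div_eq_one_iff_eq r0).mp h)
  have hs : p - r ≠ 0 := sub_ne_zero.mpr hpr
  have hs' : r - p ≠ 0 := sub_ne_zero.mpr hpr.symm
  rw [Jb, deriv_zl_eq hne, zf, zf, show -α - β = -(α + β) by ring, neg_neg, Complex.exp_neg,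
    neg_mul, Complex.exp_neg, Complex.exp_nat_mul, e1]
  have h1 : 1 - p / r ≠ 0 := by rw [one_sub_div r0]; exact div_ne_zero hs' r0
  have h2 : 1 - (p / r)⁻¹ ≠ 0 := by rw [inv_div, one_sub_div p0]; exact div_ne_zero hs p0
  rw [div_pow, inv_div, inv_div, one_sub_div r0, one_sub_div p0]
  have hpN : p ^ N ≠ 0 := pow_ne_zero _ p0
  field_simp
  ring

lemma Ja_rat (N : ℕ) {α1 α2 β p q r : ℂ} (hp : Complex.exp α1 = p) (hq : Complex.exp α2 = q)
    (hr : Complex.exp (-β) = r) (hpr : p ≠ r) (hqr : q ≠ r) (hpq : p ≠ q) :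
    Ja N α1 α2 β = p * q * r * (r ^ N / p ^ N - r ^ N / q ^ N) / ((p - r) * (p - q) * (r - q)) := by
  have p0 : p ≠ 0 := hp ▸ Complex.exp_ne_zero _
  have q0 : q ≠ 0 := hq ▸ Complex.exp_ne_zero _
  have r0 : r ≠ 0 := hr ▸ Complex.exp_ne_zero _
  have e1 : Complex.exp (α1 + β) = p / r := by
    rw [Complex.exp_add, hp, ← hr, Complex.exp_neg]; simp
  have e2 : Complex.exp (α2 + β) = q / r := by
    rw [Complex.exp_add, hq, ← hr, Complex.exp_neg]; simp
  have e3 : Complex.exp (α2 - α1) = q / p := by rw [Complex.exp_sub, hp, hq]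
  have e4 : Complex.exp (α1 - α2) = p / q := by rw [Complex.exp_sub, hp, hq]
  have n1 : Complex.exp (α1 + β) ≠ 1 := by
    rw [e1]; intro h; exact hpr ((div_eq_one_iff_eq r0).mp h)
  have n2 : Complex.exp (α2 + β) ≠ 1 := by
    rw [e2]; intro h; exact hqr ((div_eq_one_iff_eq r0).mp h)
  have n3 : Complex.exp (α2 - α1) ≠ 1 := by
    rw [e3]; intro h; exact hpq ((div_eq_one_iff_eq p0).mp h).symm
  have n4 : Complex.exp (α1 - α2) ≠ 1 := by
    rw [e4]; intro h; exact hpq ((div_eq_one_iff_eq q0).mp h)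
  rw [Ja, zl_eq n1, zl_eq n2, zl_eq n3, zl_eq n4, zf, zf, zf, zf,
    show -α1 - β = -(α1 + β) by ring, show -α2 - β = -(α2 + β) by ring, neg_neg, neg_neg,
    Complex.exp_neg, Complex.exp_neg, neg_mul, neg_mul, Complex.exp_neg, Complex.exp_neg,
    Complex.exp_nat_mul, Complex.exp_nat_mul, e1, e2, e3, e4]
  rw [div_pow, div_pow, inv_div, inv_div, inv_div, inv_div, one_sub_div r0, one_sub_div r0,
    one_sub_div p0, one_sub_div p0, one_sub_div q0, one_sub_div q0]
  have a1 : p - r ≠ 0 := sub_ne_zero.mpr hpr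
  have a2 : r - p ≠ 0 := sub_ne_zero.mpr hpr.symm
  have a3 : q - r ≠ 0 := sub_ne_zero.mpr hqr
  have a4 : r - q ≠ 0 := sub_ne_zero.mpr hqr.symm
  have a5 : p - q ≠ 0 := sub_ne_zero.mpr hpq
  have a6 : q - p ≠ 0 := sub_ne_zero.mpr hpq.symm
  have hpN : p ^ N ≠ 0 := pow_ne_zero _ p0
  have hqN : q ^ N ≠ 0 := pow_ne_zero _ q0
  have hrN : r ^ N ≠ 0 := pow_ne_zero _ r0
  rw [show q - r = -(r - q) by ring, show q - p = -(p - q) by ring, show r - p = -(p - r) by ring]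
  generalize p ^ N = P at *
  generalize q ^ N = Q at *
  generalize r ^ N = R at *
  field_simp
  ring

/-- the sine kernel -/
def KK (N : ℕ) (s t : ℝ) : ℂ := ∑ k : Fin N, Complex.exp (Complex.I * ((k : ℕ) * ((s : ℂ) - t)))

lemma KK_eq (N : ℕ) {s t : ℝ} {x y : ℂ} (hx : Complex.exp (Complex.I * s) = x)
    (hy : Complex.exp (Complex.I * t) = y) (h : x ≠ y) :
    KK N s t = y * (x ^ N - y ^ N) / (y ^ N * (x - y)) := by
  have x0 : x ≠ 0 := hx ▸ Complex.exp_ne_zero _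
  have y0 : y ≠ 0 := hy ▸ Complex.exp_ne_zero _
  have e : ∀ k : Fin N, Complex.exp (Complex.I * ((k : ℕ) * ((s : ℂ) - t))) = (x / y) ^ (k : ℕ) := by
    intro k
    rw [← hx, ← hy, ← Complex.exp_sub, ← Complex.exp_nat_mul]
    congr 1; ring
  rw [KK, Finset.sum_congr rfl fun k _ => e k, Fin.sum_univ_eq_sum_range (fun k => (x / y) ^ k),
    geom_sum_eq]
  · have : x - y ≠ 0 := sub_ne_zero.mpr h
    have hyN : y ^ N ≠ 0 := pow_ne_zero _ y0
    rw [div_pow, div_sub_one y0, div_sub_one hyN]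
    field_simp
  · intro hc; exact h ((div_eq_one_iff_eq y0).mp hc)

lemma Jsum_eq (N : ℕ) (t1 t2 t3 : ℝ) (h12 : Complex.exp (Complex.I * t1) ≠ Complex.exp (Complex.I * t2))
    (h13 : Complex.exp (Complex.I * t1) ≠ Complex.exp (Complex.I * t3))
    (h23 : Complex.exp (Complex.I * t2) ≠ Complex.exp (Complex.I * t3)) :
    Jsum N t1 t2 t3 = (N : ℂ) ^ 3 - N * (KK N t1 t2 * KK N t2 t1 + KK N t1 t3 * KK N t3 t1
      + KK N t2 t3 * KK N t3 t2) + KK N t1 t2 * KK N t2 t3 * KK N t3 t1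
      + KK N t2 t1 * KK N t3 t2 * KK N t1 t3 := by
  obtain ⟨x, hx⟩ : ∃ x, Complex.exp (Complex.I * t1) = x := ⟨_, rfl⟩
  obtain ⟨y, hy⟩ : ∃ x, Complex.exp (Complex.I * t2) = x := ⟨_, rfl⟩
  obtain ⟨z, hz⟩ : ∃ x, Complex.exp (Complex.I * t3) = x := ⟨_, rfl⟩
  rw [hx, hy] at h12
  rw [hx, hz] at h13
  rw [hy, hz] at h23
  have x0 : x ≠ 0 := hx ▸ Complex.exp_ne_zero _
  have y0 : y ≠ 0 := hy ▸ Complex.exp_ne_zero _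
  have z0 : z ≠ 0 := hz ▸ Complex.exp_ne_zero _
  have nx : Complex.exp (-(Complex.I * t1)) = x⁻¹ := by rw [Complex.exp_neg, hx]
  have ny : Complex.exp (-(Complex.I * t2)) = y⁻¹ := by rw [Complex.exp_neg, hy]
  have nz : Complex.exp (-(Complex.I * t3)) = z⁻¹ := by rw [Complex.exp_neg, hz]
  have nnx : Complex.exp (-(-(Complex.I * t1))) = x := by rw [neg_neg, hx]
  have nny : Complex.exp (-(-(Complex.I * t2))) = y := by rw [neg_neg, hy]
  have nnz : Complex.exp (-(-(Complex.I * t3))) = z := by rw [neg_neg, hz]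
  have i12 : x⁻¹ ≠ y⁻¹ := fun h => h12 (inv_injective h)
  have i13 : x⁻¹ ≠ z⁻¹ := fun h => h13 (inv_injective h)
  have i23 : y⁻¹ ≠ z⁻¹ := fun h => h23 (inv_injective h)
  rw [Jsum, Ja_rat N hx hy nnz h13 h23 h12, Ja_rat N hx hz nny h12 h23.symm h13,
    Ja_rat N hy hz nnx h12.symm h13.symm h23, Ja_rat N nx ny nz i13 i23 i12,
    Ja_rat N nx nz ny i12 i23.symm i13, Ja_rat N ny nz nx i12.symm i13.symm i23,
    Jb_rat N nx nz i13, Jb_rat N ny nz i23, Jb_rat N nx ny i12, Jb_rat N nz ny i23.symm,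
    Jb_rat N ny nx i12.symm, Jb_rat N nz nx i13.symm,
    KK_eq N hx hy h12, KK_eq N hy hx h12.symm, KK_eq N hx hz h13, KK_eq N hz hx h13.symm,
    KK_eq N hy hz h23, KK_eq N hz hy h23.symm]
  have hxN : x ^ N ≠ 0 := pow_ne_zero _ x0
  have hyN : y ^ N ≠ 0 := pow_ne_zero _ y0
  have hzN : z ^ N ≠ 0 := pow_ne_zero _ z0
  simp only [inv_pow]
  generalize x ^ N = A at *
  generalize y ^ N = B at *
  generalize z ^ N = D at *
  have a1 : x - y ≠ 0 := sub_ne_zero.mpr h12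
  have a3 : x - z ≠ 0 := sub_ne_zero.mpr h13
  have a5 : y - z ≠ 0 := sub_ne_zero.mpr h23
  have s1 : y - x = -(x - y) := by ring
  have s3 : z - x = -(x - z) := by ring
  have s5 : z - y = -(y - z) := by ring
  have j1 : x⁻¹ - y⁻¹ = -(x - y) / (x * y) := by field_simp; ring
  have j3 : x⁻¹ - z⁻¹ = -(x - z) / (x * z) := by field_simp; ring
  have j5 : y⁻¹ - z⁻¹ = -(y - z) / (y * z) := by field_simp; ring
  have j2 : y⁻¹ - x⁻¹ = (x - y) / (x * y) := by field_simp
  have j4 : z⁻¹ - x⁻¹ = (x - z) / (x * z) := by field_simp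
  have j6 : z⁻¹ - y⁻¹ = (y - z) / (y * z) := by field_simp
  simp only [j1, j2, j3, j4, j5, j6, s1, s3, s5]
  have pair : ∀ {x z A D : ℂ}, x ≠ 0 → z ≠ 0 → A ≠ 0 → D ≠ 0 → x - z ≠ 0 →
      x⁻¹ * z⁻¹ / (-(x - z) / (x * z)) ^ 2 * (1 - D⁻¹ / A⁻¹)
      + z⁻¹ * x⁻¹ / ((x - z) / (x * z)) ^ 2 * (1 - A⁻¹ / D⁻¹) =
      - (z * (A - D) / (D * (x - z)) * (x * (D - A) / (A * -(x - z)))) := by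
    intro x z A D hx hz hA hD hxz
    field_simp
    ring
  have p1 := pair x0 z0 hxN hzN a3
  have p2 := pair x0 y0 hxN hyN a1
  have p3 := pair y0 z0 hyN hzN a5
  have tri : ∀ (a1' a2 a3' a4 a5' a6 b1 b2 b3 b4 b5 b6 k1 k2 k3 c1 c2 M : ℂ),
      b1 + b6 = -k1 → b3 + b5 = -k2 → b2 + b4 = -k3 →
      a1' + a2 + a3' + a4 + a5' + a6 = c1 + c2 →
      a1' + a2 + a3' + a4 + a5' + a6 + M * (b1 + b2 + b3 + b4 + b5 + b6) + M ^ 3 =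
      M ^ 3 - M * (k2 + k1 + k3) + c1 + c2 := by
    intro a1' a2 a3' a4 a5' a6 b1 b2 b3 b4 b5 b6 k1 k2 k3 c1 c2 M h1 h2 h3 h4
    linear_combination M * h1 + M * h2 + M * h3 + h4
  refine tri _ _ _ _ _ _ _ _ _ _ _ _ _ _ _ _ _ _ p1 p2 p3 ?_
  field_simp
  ring

lemma triple_sum {N : ℕ} (x y w : Fin N → ℂ) :
    ∑ j1, ∑ j2, ∑ j3, x j1 * y j2 * w j3 = (∑ j, x j) * (∑ j, y j) * (∑ j, w j) := by
  simp only [← Finset.mul_sum, ← Finset.sum_mul]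

/-- entries of the three point determinant -/
def ME {N : ℕ} (k : Fin 3 → Fin N) (t : Fin 3 → ℝ) : Matrix (Fin 3) (Fin 3) ℂ :=
  Matrix.of fun i l => Complex.exp (Complex.I * ((((k l : ℕ) : ℤ) - ((k i : ℕ) : ℤ) : ℤ) * t i))

/-- three point correlation function -/
def F0 (N : ℕ) (t1 t2 t3 : ℝ) : ℂ := ∑ k1 : Fin N, ∑ k2 : Fin N, ∑ k3 : Fin N,
  (ME ![k1, k2, k3] ![t1, t2, t3]).det

lemma F0_eq (N : ℕ) (t1 t2 t3 : ℝ) : F0 N t1 t2 t3 =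
    (N : ℂ) ^ 3 - N * (KK N t1 t2 * KK N t2 t1 + KK N t1 t3 * KK N t3 t1
      + KK N t2 t3 * KK N t3 t2) + KK N t1 t2 * KK N t2 t3 * KK N t3 t1
      + KK N t2 t1 * KK N t3 t2 * KK N t1 t3 := by
  have hN : (N : ℂ) = ∑ _k : Fin N, (1 : ℂ) := by simp
  have e : ∀ a b c : ℂ, Complex.exp a * Complex.exp b * Complex.exp c = Complex.exp (a + b + c) := by
    intro a b c; rw [Complex.exp_add, Complex.exp_add]
  have e1 : (∑ k1 : Fin N, ∑ k2 : Fin N, ∑ k3 : Fin N, (1 : ℂ)) = (N : ℂ) ^ 3 := by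
    simp; ring
  have e2 : (N : ℂ) * (KK N t1 t2 * KK N t2 t1) = KK N t2 t1 * KK N t1 t2 * N := by ring
  have e3 : (N : ℂ) * (KK N t1 t3 * KK N t3 t1) = KK N t3 t1 * N * KK N t1 t3 := by ring
  have e4 : (N : ℂ) * (KK N t2 t3 * KK N t3 t2) = N * KK N t3 t2 * KK N t2 t3 := by ring
  have e5 : KK N t1 t2 * KK N t2 t3 * KK N t3 t1 = KK N t3 t1 * KK N t1 t2 * KK N t2 t3 := by ring
  rw [mul_add, mul_add, e2, e3, e4, e5, ← e1, hN]
  simp only [KK]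
  rw [← triple_sum, ← triple_sum, ← triple_sum, ← triple_sum, ← triple_sum]
  simp only [← Finset.sum_add_distrib, ← Finset.sum_sub_distrib]
  rw [F0]
  refine Finset.sum_congr rfl fun k1 _ => Finset.sum_congr rfl fun k2 _ =>
    Finset.sum_congr rfl fun k3 _ => ?_
  rw [Matrix.det_fin_three]
  simp only [ME, Matrix.of_apply, Matrix.cons_val_zero, Matrix.cons_val_one, Matrix.cons_val,
    sub_self, Int.cast_zero, zero_mul, mul_zero, Complex.exp_zero, one_mul, mul_one, mul_assoc,
    ← Complex.exp_add]
  have r : ∀ a b c d f a' b' c' d' f' : ℂ, a = a' → b = b' → c = c' → d = d' → f = f' →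
    1 - a - b + c + d - f = 1 - (b' + f' + a') + c' + d' := by
    rintro a b c d f a' b' c' d' f' rfl rfl rfl rfl rfl; ring
  apply r <;> (congr 1; push_cast; ring)

lemma KK_cont (N : ℕ) : Continuous fun p : ℝ × ℝ => KK N p.1 p.2 := by
  unfold KK; fun_prop

lemma F0_cont (N : ℕ) : Continuous fun p : ℝ × ℝ × ℝ => F0 N p.1 p.2.1 p.2.2 := by
  simp only [F0_eq]
  unfold KK
  fun_prop

lemma KK_norm (N : ℕ) (s t : ℝ) : ‖KK N s t‖ ≤ N := by
  rw [KK]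
  refine (norm_sum_le _ _).trans ?_
  have : ∀ k : Fin N, ‖Complex.exp (Complex.I * ((k : ℕ) * ((s : ℂ) - t)))‖ = 1 := by
    intro k
    rw [Complex.norm_exp]; simp
  simp [this]

lemma F0_norm (N : ℕ) : ∃ C : ℝ, 0 ≤ C ∧ ∀ t1 t2 t3, ‖F0 N t1 t2 t3‖ ≤ C := by
  refine ⟨(N : ℝ) ^ 3 + N * (N * N + N * N + N * N) + N * N * N + N * N * N, by positivity, ?_⟩
  intro t1 t2 t3
  rw [F0_eq]
  have h := KK_norm N
  refine (norm_add_le _ _).trans (add_le_add ((norm_add_le _ _).trans (add_le_add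
    ((norm_sub_le _ _).trans (add_le_add ?_ ?_)) ?_)) ?_)
  · simp
  · rw [norm_mul]
    refine mul_le_mul (by simp) ?_ (norm_nonneg _) (by positivity)
    refine (norm_add_le _ _).trans (add_le_add ((norm_add_le _ _).trans (add_le_add ?_ ?_)) ?_) <;>
    · rw [norm_mul]; exact mul_le_mul (h _ _) (h _ _) (norm_nonneg _) (by positivity)
  all_goals
    rw [norm_mul, norm_mul]
    exact mul_le_mul (mul_le_mul (h _ _) (h _ _) (norm_nonneg _) (by positivity)) (h _ _)
      (norm_nonneg _) (by positivity)

lemma exp_ne_of {s t : ℝ} (h : ∀ m : ℤ, s - t ≠ 2 * π * m) :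
    Complex.exp (Complex.I * s) ≠ Complex.exp (Complex.I * t) := by
  intro hc
  rw [Complex.exp_eq_exp_iff_exists_int] at hc
  obtain ⟨n, hn⟩ := hc
  apply h n
  have h2 : (s : ℂ) = t + 2 * π * n := by
    apply mul_left_cancel₀ Complex.I_ne_zero
    rw [hn]; ring
  have h3 : s = t + 2 * π * n := by exact_mod_cast h2
  linarith

lemma F_eq_aux (F G : ℝ → ℝ → ℝ → ℂ)
    (hF : Continuous (fun p : ℝ × ℝ × ℝ => F p.1 p.2.1 p.2.2))
    (hG : Continuous (fun p : ℝ × ℝ × ℝ => G p.1 p.2.1 p.2.2))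
    (hFG : ∀ t1 t2 t3 : ℝ, (∀ m : ℤ, t1 - t2 ≠ 2 * π * m) →
      (∀ m : ℤ, t1 - t3 ≠ 2 * π * m) → (∀ m : ℤ, t2 - t3 ≠ 2 * π * m) →
      F t1 t2 t3 = G t1 t2 t3) (t1 t2 t3 : ℝ) : F t1 t2 t3 = G t1 t2 t3 := by
  obtain ⟨S, hS1, hS2, hS3, hc⟩ : ∃ S : Set ℝ, (∀ m : ℤ, t1 - t2 - 2 * π * m ∈ S) ∧
      (∀ m : ℤ, (t1 - t3 - 2 * π * m) / 2 ∈ S) ∧ (∀ m : ℤ, t2 - t3 - 2 * π * m ∈ S) ∧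
      S.Countable :=
    ⟨(Set.range fun m : ℤ => t1 - t2 - 2 * π * m) ∪
      (Set.range fun m : ℤ => (t1 - t3 - 2 * π * m) / 2) ∪
      (Set.range fun m : ℤ => t2 - t3 - 2 * π * m),
      fun m => Or.inl (Or.inl ⟨m, rfl⟩), fun m => Or.inl (Or.inr ⟨m, rfl⟩),
      fun m => Or.inr ⟨m, rfl⟩, ((Set.countable_range _).union (Set.countable_range _)).union
    (Set.countable_range _)⟩
  have hd : Dense Sᶜ := hc.dense_compl ℝ
  have h1 : Continuous fun ε : ℝ => F t1 (t2 + ε) (t3 + 2 * ε) :=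
    hF.comp (by fun_prop : Continuous fun ε : ℝ => (t1, t2 + ε, t3 + 2 * ε))
  have h2 : Continuous fun ε : ℝ => G t1 (t2 + ε) (t3 + 2 * ε) :=
    hG.comp (by fun_prop : Continuous fun ε : ℝ => (t1, t2 + ε, t3 + 2 * ε))
  have h3 : (fun ε : ℝ => F t1 (t2 + ε) (t3 + 2 * ε)) =
      fun ε : ℝ => G t1 (t2 + ε) (t3 + 2 * ε) := by
    refine h1.ext_on hd h2 fun ε hε => ?_
    have n1 : ∀ m : ℤ, t1 - (t2 + ε) ≠ 2 * π * m := by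
      intro m hm
      refine hε ?_
      have e : ε = t1 - t2 - 2 * π * m := by linarith
      rw [e]; exact hS1 m
    have n2 : ∀ m : ℤ, t1 - (t3 + 2 * ε) ≠ 2 * π * m := by
      intro m hm
      refine hε ?_
      have e : ε = (t1 - t3 - 2 * π * m) / 2 := by linarith
      rw [e]; exact hS2 m
    have n3 : ∀ m : ℤ, (t2 + ε) - (t3 + 2 * ε) ≠ 2 * π * m := by
      intro m hm
      refine hε ?_
      have e : ε = t2 - t3 - 2 * π * m := by linarith
      rw [e]; exact hS3 m
    exact hFG _ _ _ n1 n2 n3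
  have := congrFun h3 0
  simpa using this

lemma F_eq_F0 (N : ℕ) (F : ℝ → ℝ → ℝ → ℂ)
    (hF : Continuous (fun p : ℝ × ℝ × ℝ => F p.1 p.2.1 p.2.2))
    (hFeq : ∀ t1 t2 t3 : ℝ, (∀ m : ℤ, t1 - t2 ≠ 2 * π * m) →
      (∀ m : ℤ, t1 - t3 ≠ 2 * π * m) → (∀ m : ℤ, t2 - t3 ≠ 2 * π * m) →
      F t1 t2 t3 = Jsum N t1 t2 t3) (t1 t2 t3 : ℝ) : F t1 t2 t3 = F0 N t1 t2 t3 := by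
  refine F_eq_aux F (F0 N) hF (F0_cont N) ?_ t1 t2 t3
  intro t1 t2 t3 n1 n2 n3
  rw [hFeq _ _ _ n1 n2 n3, F0_eq,
      Jsum_eq N _ _ _ (exp_ne_of n1) (exp_ne_of n2) (exp_ne_of n3)]

/-- Lebesgue measure on a period -/
def lam : Measure ℝ := volume.restrict (Set.Ioc (-π) π)

instance instFiniteLam : IsFiniteMeasure lam := by unfold lam; infer_instance

lemma integral_cexp_lam (n : ℤ) : ∫ t, Complex.exp (Complex.I * (n * (t : ℝ))) ∂lam =
    if n = 0 then (2 * π : ℂ) else 0 := by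
  rw [lam, ← intervalIntegral.integral_of_le (by linarith [Real.pi_pos])]
  split_ifs with h
  · subst h; simp; ring
  · have hc : Complex.I * n ≠ 0 := mul_ne_zero Complex.I_ne_zero (by exact_mod_cast h)
    simp only [← mul_assoc]
    rw [integral_exp_mul_complex hc, div_eq_zero_iff]
    left
    rw [sub_eq_zero, Complex.exp_eq_exp_iff_exists_int]
    exact ⟨n, by push_cast; ring⟩

lemma integrable_of_cont {G : ℝ × ℝ × ℝ → ℂ} (hG : Continuous G) :
    Integrable G (lam.prod (lam.prod lam)) := by
  unfold lam
  rw [Measure.prod_restrict, Measure.prod_restrict]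
  have hK : IsCompact (Set.Icc (-π) π ×ˢ (Set.Icc (-π) π ×ˢ Set.Icc (-π) π)) :=
    isCompact_Icc.prod (isCompact_Icc.prod isCompact_Icc)
  have := hG.continuousOn.integrableOn_compact (μ := volume.prod (volume.prod volume)) hK
  exact this.mono_set (Set.prod_mono Set.Ioc_subset_Icc_self
    (Set.prod_mono Set.Ioc_subset_Icc_self Set.Ioc_subset_Icc_self))

lemma triple_integral {G : ℝ × ℝ × ℝ → ℂ} (hG : Continuous G) :
    ∫ t1 in (-π)..π, ∫ t2 in (-π)..π, ∫ t3 in (-π)..π, G (t1, t2, t3) =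
      ∫ p, G p ∂(lam.prod (lam.prod lam)) := by
  have hle : -π ≤ π := by linarith [Real.pi_pos]
  have hI := integrable_of_cont hG
  rw [integral_prod _ hI]
  simp only [intervalIntegral.integral_of_le hle]
  change ∫ t1, ∫ t2, ∫ t3, G (t1, t2, t3) ∂lam ∂lam ∂lam = _
  refine integral_congr_ae ?_
  have := hI.prod_right_ae
  filter_upwards [this] with t1 ht1
  rw [integral_prod _ ht1]

lemma integral_ME {N : ℕ} (k : Fin 3 → Fin N) (a b c : ℤ) :
    ∫ p, (ME k ![p.1, p.2.1, p.2.2]).det * (Complex.exp (Complex.I * (a * (p.1 : ℝ))) *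
      Complex.exp (Complex.I * (b * (p.2.1 : ℝ))) * Complex.exp (Complex.I * (c * (p.2.2 : ℝ))))
      ∂(lam.prod (lam.prod lam)) = (2 * π : ℂ) ^ 3 * BB k ![a, b, c] := by
  have h1 : ∀ p : ℝ × ℝ × ℝ, (ME k ![p.1, p.2.1, p.2.2]).det *
      (Complex.exp (Complex.I * (a * (p.1 : ℝ))) *
      Complex.exp (Complex.I * (b * (p.2.1 : ℝ))) * Complex.exp (Complex.I * (c * (p.2.2 : ℝ)))) =
      ∑ σ : Equiv.Perm (Fin 3), (((σ.sign : ℤ) : ℂ) *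
        (Complex.exp (Complex.I * (((((k (σ 0) : ℕ) : ℤ) - ((k 0 : ℕ) : ℤ) + a : ℤ) : ℂ) * (p.1 : ℝ))) *
        (Complex.exp (Complex.I * (((((k (σ 1) : ℕ) : ℤ) - ((k 1 : ℕ) : ℤ) + b : ℤ) : ℂ) * (p.2.1 : ℝ))) *
        Complex.exp (Complex.I * (((((k (σ 2) : ℕ) : ℤ) - ((k 2 : ℕ) : ℤ) + c : ℤ) : ℂ) * (p.2.2 : ℝ)))))) := by
    intro p
    rw [← Matrix.det_transpose, Matrix.det_apply', Finset.sum_mul]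
    refine Finset.sum_congr rfl fun σ _ => ?_
    rw [Fin.prod_univ_three, mul_assoc]
    congr 1
    simp only [ME, Matrix.transpose_apply, Matrix.of_apply, Matrix.cons_val_zero,
      Matrix.cons_val_one, Matrix.cons_val, mul_assoc, ← Complex.exp_add]
    congr 1
    push_cast; ring
  simp only [h1]
  rw [MeasureTheory.integral_finsetSum _ fun σ _ => integrable_of_cont (by fun_prop), BB,
    ← Matrix.det_transpose, Matrix.det_apply', Finset.mul_sum]
  refine Finset.sum_congr rfl fun σ _ => ?_
  rw [MeasureTheory.integral_const_mul, mul_left_comm]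
  congr 1
  have hi : ∀ u v w : ℝ → ℂ, ∫ p : ℝ × ℝ × ℝ, u p.1 * (v p.2.1 * w p.2.2) ∂(lam.prod (lam.prod lam)) =
      (∫ t, u t ∂lam) * ((∫ t, v t ∂lam) * ∫ t, w t ∂lam) := by
    intro u v w
    rw [integral_prod_mul (μ := lam) (ν := lam.prod lam) u (fun q : ℝ × ℝ => v q.1 * w q.2),
      integral_prod_mul v w]
  rw [hi (fun t => Complex.exp (Complex.I * (((((k (σ 0) : ℕ) : ℤ) - ((k 0 : ℕ) : ℤ) + a : ℤ) : ℂ) * (t : ℝ))))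
    (fun t => Complex.exp (Complex.I * (((((k (σ 1) : ℕ) : ℤ) - ((k 1 : ℕ) : ℤ) + b : ℤ) : ℂ) * (t : ℝ))))
    (fun t => Complex.exp (Complex.I * (((((k (σ 2) : ℕ) : ℤ) - ((k 2 : ℕ) : ℤ) + c : ℤ) : ℂ) * (t : ℝ))))]
  rw [integral_cexp_lam, integral_cexp_lam, integral_cexp_lam, Fin.prod_univ_three]
  simp only [Matrix.transpose_apply, Matrix.of_apply, Matrix.cons_val_zero,
      Matrix.cons_val_one, Matrix.cons_val]
  have hq : ∀ x y z : ℤ, (if x - y + z = 0 then (2 * π : ℂ) else 0) =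
      (2 * π : ℂ) * (if x + z = y then 1 else 0) := by
    intro x y z
    by_cases h : x + z = y
    · rw [if_pos h, if_pos (by omega), mul_one]
    · rw [if_neg h, if_neg (by omega), mul_zero]
  rw [hq, hq, hq]
  have hp : ∀ x y w : ℂ, 2 * (π : ℂ) * x * (2 * π * y * (2 * π * w)) = (2 * π) ^ 3 * (x * y * w) := by
    intro x y w; ring
  rw [hp]
  congr!

lemma integral_F0 (N : ℕ) (a b c : ℤ) :
    ∫ p : ℝ × ℝ × ℝ, F0 N p.1 p.2.1 p.2.2 * (Complex.exp (Complex.I * (a * (p.1 : ℝ))) *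
      Complex.exp (Complex.I * (b * (p.2.1 : ℝ))) * Complex.exp (Complex.I * (c * (p.2.2 : ℝ))))
      ∂(lam.prod (lam.prod lam)) = (2 * π : ℂ) ^ 3 *
      ∑ j1 : Fin N, ∑ j2 : Fin N, ∑ j3 : Fin N, BB ![j1, j2, j3] ![a, b, c] := by
  have hc : ∀ k : Fin 3 → Fin N, Continuous fun p : ℝ × ℝ × ℝ => (ME k ![p.1, p.2.1, p.2.2]).det *
      (Complex.exp (Complex.I * (a * (p.1 : ℝ))) *
      Complex.exp (Complex.I * (b * (p.2.1 : ℝ))) * Complex.exp (Complex.I * (c * (p.2.2 : ℝ)))) := by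
    intro k
    simp only [Matrix.det_fin_three, ME, Matrix.of_apply, Matrix.cons_val_zero,
      Matrix.cons_val_one, Matrix.cons_val]
    fun_prop
  simp only [F0, Finset.sum_mul, Finset.mul_sum]
  rw [MeasureTheory.integral_finsetSum _ fun k1 _ => integrable_finsetSum _ fun k2 _ =>
    integrable_finsetSum _ fun k3 _ => integrable_of_cont (hc _)]
  refine Finset.sum_congr rfl fun k1 _ => ?_
  rw [MeasureTheory.integral_finsetSum _ fun k2 _ =>
    integrable_finsetSum _ fun k3 _ => integrable_of_cont (hc _)]
  refine Finset.sum_congr rfl fun k2 _ => ?_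
  rw [MeasureTheory.integral_finsetSum _ fun k3 _ => integrable_of_cont (hc _)]
  exact Finset.sum_congr rfl fun k3 _ => integral_ME _ _ _ _

/-- the torus -/
abbrev T3 := UnitAddTorus (Fin 3)

lemma dense_eq {X Y : Type*} [MeasurableSpace X] [MeasurableSpace Y] (μ : Measure X)
    [IsFiniteMeasure μ] (ν : Measure Y) [IsFiniteMeasure ν] (c : ℂ)
    (E1 : C(T3, ℂ) →ₗ[ℂ] (X → ℂ)) (E2 : C(T3, ℂ) →ₗ[ℂ] (Y → ℂ)) (C1 C2 : ℝ)
    (hE1 : ∀ φ x, ‖E1 φ x‖ ≤ C1 * ‖φ‖) (hE2 : ∀ φ x, ‖E2 φ x‖ ≤ C2 * ‖φ‖)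
    (hb : ∀ n : Fin 3 → ℤ, AEStronglyMeasurable (E1 (UnitAddTorus.mFourier n)) μ ∧
      AEStronglyMeasurable (E2 (UnitAddTorus.mFourier n)) ν ∧
      ∫ x, E1 (UnitAddTorus.mFourier n) x ∂μ = c * ∫ y, E2 (UnitAddTorus.mFourier n) y ∂ν)
    (φ : C(T3, ℂ)) : ∫ x, E1 φ x ∂μ = c * ∫ y, E2 φ y ∂ν := by
  have i1 : ∀ φ, AEStronglyMeasurable (E1 φ) μ → Integrable (E1 φ) μ := fun φ h =>
    Integrable.of_bound h (C1 * ‖φ‖) (Filter.Eventually.of_forall fun x => hE1 φ x)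
  have i2 : ∀ φ, AEStronglyMeasurable (E2 φ) ν → Integrable (E2 φ) ν := fun φ h =>
    Integrable.of_bound h (C2 * ‖φ‖) (Filter.Eventually.of_forall fun x => hE2 φ x)
  have key : ∀ φ ∈ Submodule.span ℂ (Set.range (UnitAddTorus.mFourier (d := Fin 3))),
      AEStronglyMeasurable (E1 φ) μ ∧ AEStronglyMeasurable (E2 φ) ν ∧
      ∫ x, E1 φ x ∂μ = c * ∫ y, E2 φ y ∂ν := by
    intro φ hφ
    induction hφ using Submodule.span_induction with
    | mem x hx => obtain ⟨n, rfl⟩ := hx; exact hb n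
    | zero => 
      rw [map_zero, map_zero]
      exact ⟨aestronglyMeasurable_zero, aestronglyMeasurable_zero, by simp⟩
    | add x y _ _ hx hy =>
      rw [map_add, map_add]
      refine ⟨hx.1.add hy.1, hx.2.1.add hy.2.1, ?_⟩
      simp only [Pi.add_apply]
      rw [MeasureTheory.integral_add (i1 _ hx.1) (i1 _ hy.1),
        MeasureTheory.integral_add (i2 _ hx.2.1) (i2 _ hy.2.1), hx.2.2, hy.2.2, mul_add]
    | smul a x _ hx =>
      rw [map_smul, map_smul]
      refine ⟨hx.1.const_smul a, hx.2.1.const_smul a, ?_⟩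
      simp only [Pi.smul_apply]
      rw [MeasureTheory.integral_smul, MeasureTheory.integral_smul, hx.2.2, smul_eq_mul,
        smul_eq_mul, mul_left_comm]
  have hφ : φ ∈ closure ((Submodule.span ℂ (Set.range (UnitAddTorus.mFourier (d := Fin 3))) :
      Submodule ℂ C(T3, ℂ)) : Set C(T3, ℂ)) := by
    rw [← Submodule.topologicalClosure_coe, UnitAddTorus.span_mFourier_closure_eq_top]
    trivial
  rw [mem_closure_iff_seq_limit] at hφ
  obtain ⟨u, hu, hlim⟩ := hφ
  have hn : Filter.Tendsto (fun n => ‖u n - φ‖) Filter.atTop (nhds 0) :=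
    tendsto_iff_norm_sub_tendsto_zero.1 hlim
  have hbd : ∃ B, ∀ n, ‖u n‖ ≤ B := by
    obtain ⟨B, hB⟩ := (hlim.norm.bddAbove_range)
    exact ⟨B, fun n => hB ⟨n, rfl⟩⟩
  obtain ⟨B, hB⟩ := hbd
  have l1 : Filter.Tendsto (fun n => ∫ x, E1 (u n) x ∂μ) Filter.atTop (nhds (∫ x, E1 φ x ∂μ)) := by
    refine tendsto_integral_filter_of_dominated_convergence (fun _ => |C1| * B)
      (Filter.Eventually.of_forall fun n => (key _ (hu n)).1)
      (Filter.Eventually.of_forall fun n => Filter.Eventually.of_forall fun x => ?_)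
      (integrable_const _) (Filter.Eventually.of_forall fun x => ?_)
    · exact (hE1 _ _).trans (mul_le_mul (le_abs_self _) (hB n) (norm_nonneg _) (abs_nonneg _))
    · rw [tendsto_iff_norm_sub_tendsto_zero]
      refine squeeze_zero (fun n => norm_nonneg _) (fun n => ?_)
        (by simpa using hn.const_mul C1)
      have := hE1 (u n - φ) x
      rwa [map_sub, Pi.sub_apply] at this
  have l2 : Filter.Tendsto (fun n => ∫ x, E2 (u n) x ∂ν) Filter.atTop (nhds (∫ x, E2 φ x ∂ν)) := by
    refine tendsto_integral_filter_of_dominated_convergence (fun _ => |C2| * B)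
      (Filter.Eventually.of_forall fun n => (key _ (hu n)).2.1)
      (Filter.Eventually.of_forall fun n => Filter.Eventually.of_forall fun x => ?_)
      (integrable_const _) (Filter.Eventually.of_forall fun x => ?_)
    · exact (hE2 _ _).trans (mul_le_mul (le_abs_self _) (hB n) (norm_nonneg _) (abs_nonneg _))
    · rw [tendsto_iff_norm_sub_tendsto_zero]
      refine squeeze_zero (fun n => norm_nonneg _) (fun n => ?_)
        (by simpa using hn.const_mul C2)
      have := hE2 (u n - φ) x
      rwa [map_sub, Pi.sub_apply] at this
  refine tendsto_nhds_unique l1 ?_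
  have := l2.const_mul c
  refine this.congr fun n => ((key _ (hu n)).2.2).symm

/-- quotient map to the torus -/
def pt (t1 t2 t3 : ℝ) : T3 := fun i => ((![t1, t2, t3] i / (2 * π) : ℝ) : UnitAddCircle)

lemma pt_cont : Continuous fun p : ℝ × ℝ × ℝ => pt p.1 p.2.1 p.2.2 := by
  unfold pt
  refine continuous_pi fun i => ?_
  refine (AddCircle.continuous_mk' 1).comp ?_
  fin_cases i <;> simp <;> fun_prop

lemma mFourier_pt (n : Fin 3 → ℤ) (t1 t2 t3 : ℝ) : UnitAddTorus.mFourier n (pt t1 t2 t3) =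
    Complex.exp (Complex.I * (n 0 * t1)) * Complex.exp (Complex.I * (n 1 * t2)) *
      Complex.exp (Complex.I * (n 2 * t3)) := by
  have hpi : (π : ℂ) ≠ 0 := by exact_mod_cast Real.pi_ne_zero
  have h : ∀ (m : ℤ) (t : ℝ), fourier m (((t / (2 * π) : ℝ)) : UnitAddCircle) =
      Complex.exp (Complex.I * (m * t)) := by
    intro m t
    rw [fourier_coe_apply]
    congr 1
    push_cast
    field_simp
  simp only [UnitAddTorus.mFourier, ContinuousMap.coe_mk, Fin.prod_univ_three, pt,
    Matrix.cons_val_zero, Matrix.cons_val_one, Matrix.cons_val, h]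

lemma exists_phi (f : ℂ → ℂ → ℂ → ℂ) (hf : Continuous (fun p : ℂ × ℂ × ℂ => f p.1 p.2.1 p.2.2))
    (hper1 : ∀ x y w : ℂ, f (x + 2 * π) y w = f x y w)
    (hper2 : ∀ x y w : ℂ, f x (y + 2 * π) w = f x y w)
    (hper3 : ∀ x y w : ℂ, f x y (w + 2 * π) = f x y w) :
    ∃ φ : C(T3, ℂ), ∀ t1 t2 t3 : ℝ, φ (pt t1 t2 t3) = f t1 t2 t3 := by
  let q : (Fin 3 → ℝ) → T3 := fun t i => ((t i : ℝ) : UnitAddCircle)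
  have hq : IsOpenQuotientMap q := by
    have : q = Pi.map (fun (_ : Fin 3) (x : ℝ) => (x : UnitAddCircle)) := rfl
    rw [this]
    exact IsOpenQuotientMap.piMap fun i => QuotientAddGroup.isOpenQuotientMap_mk
  let g : (Fin 3 → ℝ) → ℂ := fun t => f ((2 * π * t 0 : ℝ) : ℂ) ((2 * π * t 1 : ℝ) : ℂ)
    ((2 * π * t 2 : ℝ) : ℂ)
  have hg : Continuous g := hf.comp (by fun_prop : Continuous fun t : Fin 3 → ℝ =>
    (((2 * π * t 0 : ℝ) : ℂ), ((2 * π * t 1 : ℝ) : ℂ), ((2 * π * t 2 : ℝ) : ℂ)))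
  have hP : ∀ (h : ℂ → ℂ) (_ : ∀ x, h (x + 2 * π) = h x) (a b : ℝ),
      ((a : ℝ) : UnitAddCircle) = (b : ℝ) →
      h ((2 * π * a : ℝ) : ℂ) = h ((2 * π * b : ℝ) : ℂ) := by
    intro h hh a b hab
    have hp : Function.Periodic h (2 * π) := hh
    have hab2 : (((a - b : ℝ)) : UnitAddCircle) = 0 := by
      rw [AddCircle.coe_sub, hab, sub_self]
    obtain ⟨m, hm⟩ := (AddCircle.coe_eq_zero_iff (1 : ℝ)).1 hab2
    have ha : a = b + m := by
      simp at hm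
      linarith
    have := hp.int_mul m ((2 * π * b : ℝ) : ℂ)
    rw [← this, ha]
    congr 1
    push_cast; ring
  have hw : ∀ s t, q s = q t → g s = g t := by
    intro s t hst
    have e : ∀ i, ((s i : ℝ) : UnitAddCircle) = (t i : ℝ) := fun i => congrFun hst i
    simp only [g]
    rw [hP (fun x => f x _ _) (fun x => hper1 x _ _) _ _ (e 0),
      hP (fun x => f _ x _) (fun x => hper2 _ x _) _ _ (e 1),
      hP (fun x => f _ _ x) (fun x => hper3 _ _ x) _ _ (e 2)]
  have hr : ∀ x, q (Function.surjInv hq.surjective x) = x := Function.surjInv_eq hq.surjective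
  have hc : Continuous fun x => g (Function.surjInv hq.surjective x) := by
    rw [hq.isQuotientMap.continuous_iff]
    have : (fun x => g (Function.surjInv hq.surjective x)) ∘ q = g :=
      funext fun t => hw _ _ (hr _)
    rw [this]; exact hg
  refine ⟨⟨_, hc⟩, fun t1 t2 t3 => ?_⟩
  have h1 : q (fun i => ![t1, t2, t3] i / (2 * π)) = pt t1 t2 t3 := rfl
  rw [ContinuousMap.coe_mk, ← h1, hw _ _ (hr _)]
  have hpi : ∀ t : ℝ, 2 * π * (t / (2 * π)) = t := by
    intro t; field_simp
  simp only [g, Matrix.cons_val_zero, Matrix.cons_val_one, Matrix.cons_val, hpi]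

theorem final_aux (N : ℕ) (μ : Measure (UG N)) [IsProbabilityMeasure μ]
    (hHaar : ∀ A : UG N, MeasurePreserving (fun X => A * X) μ μ)
    (θ : UG N → Fin N → ℝ)
    (hθ : ∀ (X : UG N) (s : ℂ),
      Lam X s = ∏ j, (1 - s * Complex.exp (-((θ X j : ℝ) : ℂ) * Complex.I)))
    (φ : C(T3, ℂ)) :
    ∫ X, (∑ j1, ∑ j2, ∑ j3, if j1 ≠ j2 ∧ j1 ≠ j3 ∧ j2 ≠ j3 then
          φ (pt (θ X j1) (θ X j2) (θ X j3)) else 0) ∂μ =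
      ((((2 * π) ^ 3)⁻¹ : ℝ) : ℂ) * ∫ p : ℝ × ℝ × ℝ, F0 N p.1 p.2.1 p.2.2 *
        φ (pt p.1 p.2.1 p.2.2) ∂(lam.prod (lam.prod lam)) := by
  let E1 : C(T3, ℂ) →ₗ[ℂ] (UG N → ℂ) :=
    { toFun := fun φ X => ∑ j1, ∑ j2, ∑ j3, if j1 ≠ j2 ∧ j1 ≠ j3 ∧ j2 ≠ j3 then
          φ (pt (θ X j1) (θ X j2) (θ X j3)) else 0
      map_add' := by
        intro φ ψ
        funext X
        simp only [Pi.add_apply, ← Finset.sum_add_distrib]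
        refine Finset.sum_congr rfl fun j1 _ => Finset.sum_congr rfl fun j2 _ =>
          Finset.sum_congr rfl fun j3 _ => ?_
        split_ifs <;> simp
      map_smul' := by
        intro a φ
        funext X
        simp only [Pi.smul_apply, Finset.smul_sum, RingHom.id_apply]
        refine Finset.sum_congr rfl fun j1 _ => Finset.sum_congr rfl fun j2 _ =>
          Finset.sum_congr rfl fun j3 _ => ?_
        split_ifs <;> simp }
  let E2 : C(T3, ℂ) →ₗ[ℂ] (ℝ × ℝ × ℝ → ℂ) :=
    { toFun := fun φ p => F0 N p.1 p.2.1 p.2.2 * φ (pt p.1 p.2.1 p.2.2)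
      map_add' := by
        intro φ ψ
        funext X
        simp only [Pi.add_apply, ContinuousMap.add_apply, mul_add]
      map_smul' := by
        intro a φ
        funext X
        simp only [Pi.smul_apply, ContinuousMap.smul_apply, RingHom.id_apply, smul_eq_mul,
          mul_left_comm] }
  obtain ⟨C, hC0, hC⟩ := F0_norm N
  refine dense_eq μ (lam.prod (lam.prod lam)) _ E1 E2 (N * N * N) C ?_ ?_ ?_ φ
  · intro φ X
    have hle : ∀ j1 j2 j3 : Fin N, ‖(if j1 ≠ j2 ∧ j1 ≠ j3 ∧ j2 ≠ j3 then
          φ (pt (θ X j1) (θ X j2) (θ X j3)) else 0)‖ ≤ ‖φ‖ := by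
      intro j1 j2 j3
      split_ifs
      · exact φ.norm_coe_le_norm _
      · simp
    have s3 : ∀ j1 j2 : Fin N, ‖∑ j3 : Fin N, (if j1 ≠ j2 ∧ j1 ≠ j3 ∧ j2 ≠ j3 then
          φ (pt (θ X j1) (θ X j2) (θ X j3)) else 0)‖ ≤ N * ‖φ‖ := fun j1 j2 =>
      (norm_sum_le_of_le _ fun j3 _ => hle j1 j2 j3).trans (by simp)
    have s2 : ∀ j1 : Fin N, ‖∑ j2 : Fin N, ∑ j3 : Fin N, (if j1 ≠ j2 ∧ j1 ≠ j3 ∧ j2 ≠ j3 then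
          φ (pt (θ X j1) (θ X j2) (θ X j3)) else 0)‖ ≤ N * (N * ‖φ‖) := fun j1 =>
      (norm_sum_le_of_le _ fun j2 _ => s3 j1 j2).trans (by simp)
    exact (norm_sum_le_of_le _ fun j1 _ => s2 j1).trans (by simp [mul_assoc])
  · intro φ p
    change ‖F0 N p.1 p.2.1 p.2.2 * φ (pt p.1 p.2.1 p.2.2)‖ ≤ _
    rw [norm_mul]
    exact mul_le_mul (hC _ _ _) (φ.norm_coe_le_norm _) (norm_nonneg _) hC0
  · intro n
    have h1 : E1 (UnitAddTorus.mFourier n) = fun X => evA (θ X) (fa N (n 0) (n 1) (n 2)) := by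
      funext X
      change (∑ j1, ∑ j2, ∑ j3, if j1 ≠ j2 ∧ j1 ≠ j3 ∧ j2 ≠ j3 then
          UnitAddTorus.mFourier n (pt (θ X j1) (θ X j2) (θ X j3)) else 0) = _
      simp only [fa, map_sum]
      refine Finset.sum_congr rfl fun j1 _ => Finset.sum_congr rfl fun j2 _ =>
          Finset.sum_congr rfl fun j3 _ => ?_
      split_ifs
      · rw [map_mul, map_mul, evA_zz, evA_zz, evA_zz, mFourier_pt]
      · rw [map_zero]
    have h2 : E2 (UnitAddTorus.mFourier n) = fun p : ℝ × ℝ × ℝ => F0 N p.1 p.2.1 p.2.2 *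
        (Complex.exp (Complex.I * (n 0 * (p.1 : ℝ))) * Complex.exp (Complex.I * (n 1 * (p.2.1 : ℝ)))
        * Complex.exp (Complex.I * (n 2 * (p.2.2 : ℝ)))) := by
      funext p
      change F0 N p.1 p.2.1 p.2.2 * UnitAddTorus.mFourier n (pt p.1 p.2.1 p.2.2) = _
      rw [mFourier_pt]
    rw [h1, h2]
    refine ⟨(evA_cont θ hθ (fa_mem N _ _ _)).aestronglyMeasurable, ?_, ?_⟩
    · exact ((F0_cont N).mul (by fun_prop)).aestronglyMeasurable
    · rw [haar_coeff θ hθ μ hHaar _ (fa_mem N _ _ _), coeff_fa, integral_F0, ← mul_assoc]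
      have : ((((2 * π) ^ 3)⁻¹ : ℝ) : ℂ) * (2 * π : ℂ) ^ 3 = 1 := by
        have hpi : (π : ℂ) ≠ 0 := by exact_mod_cast Real.pi_ne_zero
        push_cast
        field_simp
      rw [this, one_mul]

/-- Triple correlation of eigenvalues of random unitary matrices via the ratios theorem:
the average over `U(N)` (with Haar probability measure, characterised as a left-invariant
probability measure) of the sum of `f` over triples of distinct eigenvalue indices equals
the triple integral of the `J`-term sum (interpreted via its unique continuous/analytic
extension `F` across the removable singularities) against `f`. -/
theorem stmt_16 (N : ℕ) (μ : Measure (Matrix.unitaryGroup (Fin N) ℂ))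
    [IsProbabilityMeasure μ]
    (hHaar : ∀ A : Matrix.unitaryGroup (Fin N) ℂ,
      MeasurePreserving (fun X => A * X) μ μ)
    (θ : Matrix.unitaryGroup (Fin N) ℂ → Fin N → ℝ)
    (hθ : ∀ (X : Matrix.unitaryGroup (Fin N) ℂ) (s : ℂ),
      Lam X s = ∏ j, (1 - s * Complex.exp (-((θ X j : ℝ) : ℂ) * Complex.I)))
    (f : ℂ → ℂ → ℂ → ℂ)
    (hf : Differentiable ℂ (fun p : ℂ × ℂ × ℂ => f p.1 p.2.1 p.2.2))
    (hper1 : ∀ x y w : ℂ, f (x + 2 * π) y w = f x y w)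
    (hper2 : ∀ x y w : ℂ, f x (y + 2 * π) w = f x y w)
    (hper3 : ∀ x y w : ℂ, f x y (w + 2 * π) = f x y w)
    (F : ℝ → ℝ → ℝ → ℂ)
    (hF : Continuous (fun p : ℝ × ℝ × ℝ => F p.1 p.2.1 p.2.2))
    (hFeq : ∀ t1 t2 t3 : ℝ, (∀ m : ℤ, t1 - t2 ≠ 2 * π * m) →
      (∀ m : ℤ, t1 - t3 ≠ 2 * π * m) → (∀ m : ℤ, t2 - t3 ≠ 2 * π * m) →
      F t1 t2 t3 = Jsum N t1 t2 t3) :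
    (∫ X, (∑ j1, ∑ j2, ∑ j3,
        if j1 ≠ j2 ∧ j1 ≠ j3 ∧ j2 ≠ j3 then
          f ((θ X j1 : ℝ) : ℂ) ((θ X j2 : ℝ) : ℂ) ((θ X j3 : ℝ) : ℂ)
        else 0) ∂μ) =
      ((((2 * π) ^ 3)⁻¹ : ℝ) : ℂ) *
        ∫ t1 in (-π)..π, ∫ t2 in (-π)..π, ∫ t3 in (-π)..π,
          F t1 t2 t3 * f (t1 : ℂ) (t2 : ℂ) (t3 : ℂ) := by
  have hfc := hf.continuous
  obtain ⟨φ, hφ⟩ := exists_phi f hfc hper1 hper2 hper3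
  have hG : Continuous fun p : ℝ × ℝ × ℝ =>
      F p.1 p.2.1 p.2.2 * f (p.1 : ℂ) (p.2.1 : ℂ) (p.2.2 : ℂ) :=
    hF.mul (hfc.comp (by fun_prop : Continuous fun p : ℝ × ℝ × ℝ =>
      ((p.1 : ℂ), (p.2.1 : ℂ), (p.2.2 : ℂ))))
  have h1 := final_aux N μ hHaar θ hθ φ
  have h2 := triple_integral hG
  simp only at h2
  rw [h2]
  simp only [hφ] at h1
  simp only [F_eq_F0 N F hF hFeq]
  convert h1

end
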